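/- Let d ≥ 1, a > 0, and J ≥ 0 an integer. There exists a constant C = C(d,a) > 0, depending only on d and a, with the following property. Let R > 0 and let X = {x₁,…,xₙ} ⊂ S^d be a spherical t-design with t ≥ 2^{J+2}. Suppose that for every integer j > J a function g_j ∈ 𝒫_{2^{j+1}}^d is given with ‖g_j‖_{L²(μ)} ≤ R · 2^{−j(a + d/2)}. Then Σ_{j > J} ((1/n) Σ_{i=1}^n g_j(xᵢ)²)^{1/2} ≤ C · R · 2^{−J(a + d/2)}. -/

import Mathlib

open MeasureTheory

noncomputable section

abbrev Sph (d : ℕ) := Metric.sphere (0 : EuclideanSpace ℝ (Fin (d+1))) 1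

/-- Evaluation on the sphere of a polynomial in `d+1` variables. -/
def polyEval {d : ℕ} (q : MvPolynomial (Fin (d+1)) ℝ) (x : Sph d) : ℝ :=
  MvPolynomial.eval (fun i => (x : EuclideanSpace ℝ (Fin (d+1))) i) q

/-- `f` is the restriction to the sphere of a real polynomial of total degree ≤ L,
i.e. `f ∈ 𝒫_L^d`. -/
def InPoly (d L : ℕ) (f : Sph d → ℝ) : Prop :=
  ∃ q : MvPolynomial (Fin (d+1)) ℝ, q.totalDegree ≤ L ∧ ∀ x, f x = polyEval q x

/-- Rotation (linear isometry) acting on the sphere. -/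
def sphereRot {d : ℕ}
    (T : EuclideanSpace ℝ (Fin (d+1)) ≃ₗᵢ[ℝ] EuclideanSpace ℝ (Fin (d+1)))
    (x : Sph d) : Sph d :=
  ⟨T x, by
    have hx : ‖(x : EuclideanSpace ℝ (Fin (d+1)))‖ = 1 := by
      simpa using mem_sphere_zero_iff_norm.mp x.2
    simp [mem_sphere_zero_iff_norm, hx]⟩

/-- `μ` is the normalized rotation-invariant (uniform) surface probability measure
on the sphere. -/
def IsUniform {d : ℕ} (μ : Measure (Sph d)) : Prop :=
  IsProbabilityMeasure μ ∧
    ∀ T : EuclideanSpace ℝ (Fin (d+1)) ≃ₗᵢ[ℝ] EuclideanSpace ℝ (Fin (d+1)),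
      μ.map (sphereRot T) = μ

/-- `x` is a spherical `t`-design (w.r.t. the uniform measure `μ`). -/
def IsDesign {d : ℕ} (μ : Measure (Sph d)) {n : ℕ} (x : Fin n → Sph d) (t : ℕ) : Prop :=
  ∀ q : MvPolynomial (Fin (d+1)) ℝ, q.totalDegree ≤ t →
    (∑ i, polyEval q (x i)) / n = ∫ y, polyEval q y ∂μ

end

/-!
For `g` of degree at most `L` and a design of strength at least `2 * k`, with `1 ≤ k ≤ L`, one has the
one-sided Marcinkiewicz–Zygmund inequality (`mean_sq_le`)
`(1/n) ∑ g(x_i)² ≤ C (L/k)^d ∫ g²`, with `C` depending only on `d`. Taking `L = 2^(j+1)` and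
`k = 2^(J+1)`, the `j`-th term of the sum is at most a constant times `R 2^(-J(a+d/2)) 2^(-a(j-J))`,
and the geometric series is summed.

The inequality has two ingredients.

* Locally (`exists_local_majorant`), `g(x)²` is bounded, whenever `dist x y ≤ c / L`, by `H y` for some
  continuous `H` with `∫ H ≤ 10 ∫ g²`. The function `H` comes from the Taylor expansion of `g` along
  the great circle from `y` to `x`. The derivatives along great circles are controlled by the
  infinitesimal rotations `rotD i j = x_j ∂_i - x_i ∂_j`, which satisfy the `L²` Bernstein inequality
  `‖rotD i j q‖ ≤ L ‖q‖` (`bernstein_rotD`). That inequality follows by decomposing `q` into weight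
  functions for the rotations of the `(i, j)` plane: the weights of a polynomial of degree at most `L`
  lie in `[-L, L]`, and weight functions of different weights are orthogonal.
* A cap of radius `c / k` contains at most a fraction `O(k ^ (-d))` of the points of the design
  (`card_design_near_le`). Indeed the reproducing kernel of the polynomials of degree at most `k`,
  peaked at the centre of the cap, is at least half its maximum `M` on the cap, again by the Bernstein
  inequality; its square has degree at most `2 * k` and mean `M`. The dimension of the space gives
  `M ≥ (k / d) ^ d` (`exists_peak`).

Integrating the local majorant over the caps of radius `c / L` around the points, whose measure is at
least a constant times `L ^ (-d)` (`capConst_le`), and counting overlaps with the second ingredient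
gives the inequality.
-/

noncomputable section

/-! ### Infinitesimal rotations acting on polynomials -/

open MvPolynomial in
/-- The infinitesimal rotation `x_j ∂_i - x_i ∂_j` in the `(i, j)` coordinate plane, acting on
polynomials. -/
def rotD {d : ℕ} (i j : Fin (d+1)) :
    Derivation ℝ (MvPolynomial (Fin (d+1)) ℝ) (MvPolynomial (Fin (d+1)) ℝ) :=
  (X j : MvPolynomial (Fin (d+1)) ℝ) • pderiv i - (X i : MvPolynomial (Fin (d+1)) ℝ) • pderiv j

lemma polyEval_add {d : ℕ} (p q : MvPolynomial (Fin (d+1)) ℝ) (x : Sph d) :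
    polyEval (p + q) x = polyEval p x + polyEval q x := by simp [polyEval]

lemma polyEval_mul {d : ℕ} (p q : MvPolynomial (Fin (d+1)) ℝ) (x : Sph d) :
    polyEval (p * q) x = polyEval p x * polyEval q x := by simp [polyEval]

lemma polyEval_smul {d : ℕ} (c : ℝ) (q : MvPolynomial (Fin (d+1)) ℝ) (x : Sph d) :
    polyEval (c • q) x = c * polyEval q x := by simp [polyEval]

lemma polyEval_sum {d : ℕ} {ι : Type*} (s : Finset ι) (q : ι → MvPolynomial (Fin (d+1)) ℝ)
    (x : Sph d) : polyEval (∑ i ∈ s, q i) x = ∑ i ∈ s, polyEval (q i) x := by simp [polyEval]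

lemma continuous_polyEval {d : ℕ} (q : MvPolynomial (Fin (d+1)) ℝ) :
    Continuous (polyEval q : Sph d → ℝ) := by
  unfold polyEval
  refine (MvPolynomial.continuous_eval q).comp ?_
  fun_prop

lemma integrable_of_continuous {d : ℕ} {μ : Measure (Sph d)} [IsProbabilityMeasure μ]
    {f : Sph d → ℝ} (hf : Continuous f) : Integrable f μ :=
  hf.integrable_of_hasCompactSupport (HasCompactSupport.of_compactSpace f)

lemma totalDegree_rotD_le {d : ℕ} (i j : Fin (d+1)) (q : MvPolynomial (Fin (d+1)) ℝ) :
    (rotD i j q).totalDegree ≤ q.totalDegree := by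
  classical
  have key : ∀ k l : Fin (d+1), (MvPolynomial.X l * MvPolynomial.pderiv k q).totalDegree
      ≤ q.totalDegree := by
    intro k l
    conv_lhs => rw [q.as_sum, map_sum, Finset.mul_sum]
    refine MvPolynomial.totalDegree_finsetSum_le fun m hm => ?_
    rw [MvPolynomial.pderiv_monomial]
    have hm' := MvPolynomial.le_totalDegree hm
    by_cases hk : m k = 0
    · simp [hk]
    · refine (MvPolynomial.totalDegree_mul _ _).trans ?_
      refine (Nat.add_le_add (MvPolynomial.totalDegree_X (R := ℝ) l).le
        (MvPolynomial.totalDegree_monomial_le _ _)).trans ?_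
      have h1 : (m - Finsupp.single k 1) + Finsupp.single k 1 = m := by
        refine tsub_add_cancel_of_le ?_
        simpa [Nat.one_le_iff_ne_zero] using hk
      have h2 := congrArg (fun f : Fin (d+1) →₀ ℕ => f.sum fun _ e => e) h1
      beta_reduce at h2
      rw [Finsupp.sum_add_index' (by simp) (by simp), Finsupp.sum_single_index rfl] at h2
      change 1 + (m - Finsupp.single k 1).sum (fun _ e => e) ≤ _
      omega
  have : rotD i j q = MvPolynomial.X j * MvPolynomial.pderiv i q
      - MvPolynomial.X i * MvPolynomial.pderiv j q := by simp [rotD]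
  rw [this]
  exact (MvPolynomial.totalDegree_sub _ _).trans (max_le (key _ _) (key _ _))

/-! ### Taylor expansion along great circles -/

lemma hasDerivAt_eval {σ : Type*} [Fintype σ] [DecidableEq σ] (q : MvPolynomial σ ℝ) (γ : ℝ → σ → ℝ)
    (γ' : σ → ℝ) (s : ℝ) (h : ∀ i, HasDerivAt (fun u => γ u i) (γ' i) s) :
    HasDerivAt (fun u => MvPolynomial.eval (γ u) q)
      (∑ i, γ' i * MvPolynomial.eval (γ s) (MvPolynomial.pderiv i q)) s := by
  induction q using MvPolynomial.induction_on with
  | C a => simpa using hasDerivAt_const s a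
  | add p q hp hq =>
    simp only [map_add, mul_add, Finset.sum_add_distrib]
    exact hp.add hq
  | mul_X p n hp =>
    simp only [map_mul, MvPolynomial.eval_X, Derivation.leibniz, MvPolynomial.pderiv_X]
    refine (hp.mul (h n)).congr_deriv ?_
    simp only [smul_eq_mul, map_add, map_mul, MvPolynomial.eval_X, mul_add, Finset.sum_add_distrib,
      Finset.sum_mul, Pi.single_apply]
    simp [apply_ite, Finset.sum_ite_eq, mul_comm]
    rw [add_comm]
    congr 1
    refine Finset.sum_congr rfl fun i _ => by ring

/-- The infinitesimal rotation `∑ v_i x_j (x_j ∂_i - x_i ∂_j)`, which generates the motion from `x`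
in the direction `v`. -/
def dirD {d : ℕ} (v x : Fin (d+1) → ℝ) (q : MvPolynomial (Fin (d+1)) ℝ) :
    MvPolynomial (Fin (d+1)) ℝ := ∑ p : Fin (d+1) × Fin (d+1), (v p.1 * x p.2) • rotD p.1 p.2 q

/-- `∑_w (D_w q)(y)²` over all words `w` of length `k` in the coordinate infinitesimal
rotations. -/
def gradSq {d : ℕ} : ℕ → MvPolynomial (Fin (d+1)) ℝ → Sph d → ℝ
  | 0, q, y => polyEval q y ^ 2
  | k+1, q, y => ∑ p : Fin (d+1) × Fin (d+1), gradSq k (rotD p.1 p.2 q) y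

lemma gradSq_nonneg {d : ℕ} (k : ℕ) (q : MvPolynomial (Fin (d+1)) ℝ) (y : Sph d) :
    0 ≤ gradSq k q y := by
  induction k generalizing q with
  | zero => exact sq_nonneg _
  | succ k ih => exact Finset.sum_nonneg fun _ _ => ih _

lemma continuous_gradSq {d : ℕ} (k : ℕ) (q : MvPolynomial (Fin (d+1)) ℝ) :
    Continuous (gradSq k q : Sph d → ℝ) := by
  induction k generalizing q with
  | zero => exact (continuous_polyEval q).pow 2
  | succ k ih => exact continuous_finsetSum _ fun _ _ => ih _

lemma dirD_iterate_sum {d : ℕ} (v x : Fin (d+1) → ℝ) (k : ℕ) {ι : Type*} (s : Finset ι) (c : ι → ℝ)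
    (q : ι → MvPolynomial (Fin (d+1)) ℝ) :
    (dirD v x)^[k] (∑ i ∈ s, c i • q i) = ∑ i ∈ s, c i • (dirD v x)^[k] (q i) := by
  induction k generalizing q with
  | zero => rfl
  | succ k ih =>
    simp only [Function.iterate_succ, Function.comp]
    rw [← ih]
    congr 1
    simp only [dirD, map_sum, Derivation.map_smul, Finset.smul_sum]
    rw [Finset.sum_comm]
    refine Finset.sum_congr rfl fun i _ => Finset.sum_congr rfl fun p _ => smul_comm _ _ _

/-- Cauchy–Schwarz, since the coefficients `v i * x j` of `dirD v x` have square sum `1`. -/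
lemma dirD_iterate_sq_le {d : ℕ} (v x : Fin (d+1) → ℝ) (hv : ∑ i, v i ^ 2 = 1)
    (hx : ∑ i, x i ^ 2 = 1) (k : ℕ) (q : MvPolynomial (Fin (d+1)) ℝ) (y : Sph d) :
    polyEval ((dirD v x)^[k] q) y ^ 2 ≤ gradSq k q y := by
  induction k generalizing q with
  | zero => exact le_rfl
  | succ k ih =>
    rw [Function.iterate_succ, Function.comp, dirD, dirD_iterate_sum, polyEval_sum]
    simp only [polyEval_smul]
    refine (Finset.sum_mul_sq_le_sq_mul_sq _ _ _).trans ?_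
    have : ∑ p : Fin (d+1) × Fin (d+1), (v p.1 * x p.2) ^ 2 = 1 := by
      simp only [mul_pow]
      rw [Fintype.sum_prod_type]
      simp only
      rw [← Finset.sum_mul_sum, hv, hx, one_mul]
    rw [this, one_mul]
    exact Finset.sum_le_sum fun p _ => ih _

/-- Along the great circle `γ s = cos s • x + sin s • v` one has `d/ds q(γ s) = (dirD v x q)(γ s)`. -/
lemma hasDerivAt_geodesic {d : ℕ} (v x : Fin (d+1) → ℝ) (hv : ∑ i, v i ^ 2 = 1)
    (hx : ∑ i, x i ^ 2 = 1) (hvx : ∑ i, v i * x i = 0) (q : MvPolynomial (Fin (d+1)) ℝ) (s : ℝ) :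
    HasDerivAt (fun u => MvPolynomial.eval (fun i => Real.cos u * x i + Real.sin u * v i) q)
      (MvPolynomial.eval (fun i => Real.cos s * x i + Real.sin s * v i) (dirD v x q)) s := by
  refine (hasDerivAt_eval q (fun u i => Real.cos u * x i + Real.sin u * v i)
    (fun i => - Real.sin s * x i + Real.cos s * v i) s ?_).congr_deriv (Eq.symm ?_)
  rotate_left
  · simp only [dirD, map_sum, rotD]
    simp [Fintype.sum_prod_type, MvPolynomial.smul_eval]
    set c := Real.cos s
    set t := Real.sin s
    set P := fun i => MvPolynomial.eval (fun i => c * x i + t * v i) (MvPolynomial.pderiv i q)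
    change ∑ i, ∑ j, v i * x j * ((c * x j + t * v j) * P i - (c * x i + t * v i) * P j)
      = ∑ i, (-(t * x i) + c * v i) * P i
    have e : ∀ i j, v i * x j * ((c * x j + t * v j) * P i - (c * x i + t * v i) * P j)
      = (c * (v i * P i)) * x j ^ 2 + (t * (v i * P i)) * (v j * x j)
        - (v i * x i) * (c * (x j * P j)) - v i ^ 2 * (t * (x j * P j)) := by intros; ring
    simp only [e, Finset.sum_add_distrib, Finset.sum_sub_distrib, ← Finset.mul_sum,
      ← Finset.sum_mul, hv, hx, hvx]
    simp only [add_mul, Finset.sum_add_distrib]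
    simp [Finset.mul_sum, mul_assoc]
    ring
  · intro i
    exact ((Real.hasDerivAt_cos s).mul_const _).add ((Real.hasDerivAt_sin s).mul_const _)

/-- Taylor theorem at `0` for `φ 0`, whose successive derivatives are the `φ k`. -/
lemma taylor_bound (φ : ℕ → ℝ → ℝ) (h : ∀ k s, HasDerivAt (φ k) (φ (k+1) s) s) (K : ℕ) (B : ℝ)
    (hB : ∀ s, |φ K s| ≤ B) (s : ℝ) (hs : 0 ≤ s) :
    |φ 0 s - ∑ k ∈ Finset.range K, s ^ k / k.factorial * φ k 0| ≤ B * (s ^ K / K.factorial) := by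
  induction K generalizing φ s with
  | zero => simpa using hB s
  | succ K ih =>
    have mon : ∀ k : ℕ, ∀ u : ℝ, HasDerivAt (fun u : ℝ => u ^ (k+1) / (k+1).factorial)
        (u ^ k / k.factorial) u := by
      intro k u
      refine ((hasDerivAt_pow (k+1) u).div_const ((k+1).factorial : ℝ)).congr_deriv ?_
      rw [Nat.factorial_succ]
      push_cast
      field_simp
    have hd : ∀ u, HasDerivAt
        (fun u => φ 0 u - ∑ k ∈ Finset.range (K+1), u ^ k / k.factorial * φ k 0)
        (φ 1 u - ∑ k ∈ Finset.range K, u ^ k / k.factorial * φ (k+1) 0) u := by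
      intro u
      simp only [Finset.sum_range_succ' _ K]
      refine (h 0 u).sub ?_
      have := (HasDerivAt.fun_sum (u := Finset.range K)
        (fun k _ => (mon k u).mul_const (φ (k+1) 0))).add_const (u ^ 0 / (Nat.factorial 0) * φ 0 0)
      simpa using this
    have hb : ∀ u, HasDerivAt (fun u => B * (u ^ (K+1) / (K+1).factorial))
        (B * (u ^ K / K.factorial)) u := fun u => (mon K u).const_mul B
    have := image_norm_le_of_norm_deriv_right_le_deriv_boundary (a := 0) (b := s)
      (fun u _ => (hd u).continuousAt.continuousWithinAt)
      (fun u _ => (hd u).hasDerivWithinAt)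
      (B := fun u => B * (u ^ (K+1) / (K+1).factorial))
      (by simp [Finset.sum_range_succ']) (fun u => hb u)
      (fun u hu => by
        rw [Real.norm_eq_abs]
        exact ih (fun k => φ (k+1)) (fun k => h (k+1)) hB u hu.1) (x := s) ⟨hs, le_rfl⟩
    rwa [Real.norm_eq_abs] at this

/-! ### Bernstein inequality in `L²` -/

lemma continuous_sphereRot {d : ℕ}
    (T : EuclideanSpace ℝ (Fin (d+1)) ≃ₗᵢ[ℝ] EuclideanSpace ℝ (Fin (d+1))) :
    Continuous (sphereRot T) :=
  Continuous.subtype_mk (T.continuous.comp continuous_subtype_val) _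

lemma integral_sphereRot {d : ℕ} {μ : Measure (Sph d)} (hμ : IsUniform μ)
    (T : EuclideanSpace ℝ (Fin (d+1)) ≃ₗᵢ[ℝ] EuclideanSpace ℝ (Fin (d+1)))
    {G : Type*} [NormedAddCommGroup G] [NormedSpace ℝ G] [SecondCountableTopology G]
    {f : Sph d → G} (hf : Continuous f) :
    ∫ y, f (sphereRot T y) ∂μ = ∫ y, f y ∂μ := by
  borelize G
  conv_rhs => rw [← hμ.2 T]
  rw [integral_map (continuous_sphereRot T).measurable.aemeasurable]
  exact hf.measurable.aestronglyMeasurable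

/-- Rotation by the angle `s` in the `(i, j)` coordinate plane. -/
def planeRot {d : ℕ} (i j : Fin (d+1)) (hij : i ≠ j) (s : ℝ) :
    EuclideanSpace ℝ (Fin (d+1)) ≃ₗᵢ[ℝ] EuclideanSpace ℝ (Fin (d+1)) :=
  LinearIsometry.toLinearIsometryEquiv
    { toFun := fun y => WithLp.toLp 2 fun k =>
        if k = i then Real.cos s * y i + Real.sin s * y j
        else if k = j then Real.cos s * y j - Real.sin s * y i else y k
      map_add' := by
        intro x y
        ext k
        simp only [PiLp.add_apply]
        split_ifs <;> ring
      map_smul' := by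
        intro c y
        ext k
        simp only [PiLp.smul_apply, RingHom.id_apply, smul_eq_mul]
        split_ifs <;> ring
      norm_map' := by
        intro y
        rw [EuclideanSpace.norm_eq, EuclideanSpace.norm_eq]
        congr 1
        rw [← sub_eq_zero, ← Finset.sum_sub_distrib, Fintype.sum_eq_add i j hij]
        · simp only [Real.norm_eq_abs, sq_abs, LinearMap.coe_mk, AddHom.coe_mk, if_true,
            if_neg hij.symm]
          linear_combination (y i ^ 2 + y j ^ 2) * Real.sin_sq_add_cos_sq s
        · rintro k ⟨hi, hj⟩
          simp [hi, hj] } rfl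

lemma planeRot_apply {d : ℕ} (i j : Fin (d+1)) (hij : i ≠ j) (s : ℝ) (y : Sph d) (k : Fin (d+1)) :
    (sphereRot (planeRot i j hij s) y : EuclideanSpace ℝ (Fin (d+1))) k =
      if k = i then Real.cos s * y.1 i + Real.sin s * y.1 j
        else if k = j then Real.cos s * y.1 j - Real.sin s * y.1 i else y.1 k := rfl

/-- Continuous functions on which the rotations of the `(i, j)` plane act through the character
`s ↦ exp (√-1 * k * s)`. -/
def weightSpace {d : ℕ} (i j : Fin (d+1)) (hij : i ≠ j) (k : ℤ) : Submodule ℂ C(Sph d, ℂ) where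
  carrier := {F | ∀ (s : ℝ) (y : Sph d),
    F (sphereRot (planeRot i j hij s) y) = Complex.exp (k * s * Complex.I) * F y}
  add_mem' := by
    intro F G hF hG s y
    simp [hF s y, hG s y, mul_add]
  zero_mem' := by intro s y; simp
  smul_mem' := by
    intro c F hF s y
    simp only [ContinuousMap.smul_apply, hF s y, smul_eq_mul]
    ring

/-- The sum of the weight spaces with weight at most `L` in absolute value. -/
def weightLE {d : ℕ} (i j : Fin (d+1)) (hij : i ≠ j) (L : ℕ) : Submodule ℂ C(Sph d, ℂ) :=
  ⨆ k ∈ Finset.Icc (-L : ℤ) L, weightSpace i j hij k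

lemma weightSpace_le {d : ℕ} (i j : Fin (d+1)) (hij : i ≠ j) (L : ℕ) (k : ℤ)
    (hk : k ∈ Finset.Icc (-L : ℤ) L) : weightSpace i j hij k ≤ weightLE i j hij L :=
  le_iSup₂_of_le k hk le_rfl

lemma weightLE_mul {d : ℕ} (i j : Fin (d+1)) (hij : i ≠ j) (a b : ℕ) {F G : C(Sph d, ℂ)}
    (hF : F ∈ weightLE i j hij a) (hG : G ∈ weightLE i j hij b) :
    F * G ∈ weightLE i j hij (a + b) := by
  have : weightLE i j hij a * weightLE i j hij b ≤ weightLE i j hij (a + b) := by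
    unfold weightLE
    simp only [Submodule.iSup_mul, Submodule.mul_iSup]
    refine iSup₂_le fun k hk => iSup₂_le fun l hl => ?_
    rw [Finset.mem_Icc] at hk hl
    rw [Submodule.mul_le]
    intro F hF G hG
    refine weightSpace_le i j hij (a + b) (k + l) (by
      rw [Finset.mem_Icc]; push_cast; constructor <;> omega) ?_
    intro s y
    simp only [ContinuousMap.mul_apply, hF s y, hG s y]
    push_cast
    rw [add_mul, add_mul, Complex.exp_add]
    ring
  exact this (Submodule.mul_mem_mul hF hG)

/-- The complex-valued continuous function on the sphere defined by a real polynomial. -/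
def toC {d : ℕ} (q : MvPolynomial (Fin (d+1)) ℝ) : C(Sph d, ℂ) :=
  ⟨fun y => (polyEval q y : ℂ), Complex.continuous_ofReal.comp (continuous_polyEval q)⟩

lemma toC_C_mem {d : ℕ} (i j : Fin (d+1)) (hij : i ≠ j) (a : ℝ) :
    toC (MvPolynomial.C a) ∈ weightLE i j hij 0 := by
  refine weightSpace_le i j hij 0 0 (by simp) ?_
  intro s y
  simp [toC, polyEval]

/-- `x_i ± √-1 x_j` are weight functions of weights `∓1`, and the other coordinates are
invariant. -/
lemma toC_X_mem {d : ℕ} (i j : Fin (d+1)) (hij : i ≠ j) (m : Fin (d+1)) :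
    toC (MvPolynomial.X m) ∈ weightLE i j hij 1 := by
  have hw : ∀ c : ℤ, c ^ 2 = 1 → (toC (MvPolynomial.X i) + (c * Complex.I) • toC (MvPolynomial.X j))
      ∈ weightLE i j hij 1 := by
    intro c hc
    have hc' : (c : ℂ) ^ 2 = 1 := by exact_mod_cast hc
    have hcc : c = 1 ∨ c = -1 := by simpa using hc
    refine weightSpace_le i j hij 1 (-c) ?_ ?_
    · rcases hcc with h | h <;> simp [h]
    · intro s y
      have he : Complex.exp (((-c : ℤ) : ℂ) * s * Complex.I)
          = Complex.cos s - c * Complex.sin s * Complex.I := by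
        rw [Complex.exp_mul_I]
        rcases hcc with h | h <;> (simp [h]; try ring)
      rw [he]
      simp only [toC, polyEval, ContinuousMap.add_apply, ContinuousMap.smul_apply,
        ContinuousMap.coe_mk, MvPolynomial.eval_X, planeRot_apply, if_true, if_neg hij.symm,
        smul_eq_mul]
      push_cast
      linear_combination (-Complex.sin s * (y.1 j : ℂ)) * hc'
        + (Complex.sin s * (y.1 j : ℂ) * c ^ 2) * Complex.I_sq
  by_cases hi : m = i
  · subst hi
    have := (weightLE m j hij 1).smul_mem (1 / 2) ((weightLE m j hij 1).add_mem
      (hw 1 (by norm_num)) (hw (-1) (by norm_num)))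
    convert this using 1
    ext y
    simp
    ring
  by_cases hj : m = j
  · subst hj
    have := (weightLE i m hij 1).smul_mem (1 / (2 * Complex.I)) ((weightLE i m hij 1).sub_mem
      (hw 1 (by norm_num)) (hw (-1) (by norm_num)))
    convert this using 1
    ext y
    simp
    field_simp
    linear_combination (2 * toC (MvPolynomial.X m) y) * Complex.I_sq
  · refine weightSpace_le i j hij 1 0 (by simp) ?_
    intro s y
    simp [toC, polyEval, planeRot_apply, hi, hj]

lemma toC_mul {d : ℕ} (p q : MvPolynomial (Fin (d+1)) ℝ) : toC (p * q) = toC p * toC q := by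
  ext y; simp [toC, polyEval]

lemma toC_monomial_mem {d : ℕ} (i j : Fin (d+1)) (hij : i ≠ j) (m : Fin (d+1) →₀ ℕ) (a : ℝ) :
    toC (MvPolynomial.monomial m a) ∈ weightLE i j hij m.degree := by
  induction m using Finsupp.induction_linear generalizing a with
  | zero => simpa using toC_C_mem i j hij a
  | add f g hf hg =>
    rw [← mul_one a, ← MvPolynomial.monomial_mul, toC_mul, map_add]
    exact weightLE_mul i j hij _ _ (hf a) (hg 1)
  | single k e =>
    induction e with
    | zero => simpa using toC_C_mem i j hij a
    | succ e ih =>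
      rw [Finsupp.single_add, ← mul_one a, ← MvPolynomial.monomial_mul, toC_mul, map_add]
      refine weightLE_mul i j hij _ _ ih ?_
      rw [Finsupp.degree_single]
      exact toC_X_mem i j hij k

lemma weightLE_mono {d : ℕ} (i j : Fin (d+1)) (hij : i ≠ j) {a b : ℕ} (hab : a ≤ b) :
    weightLE i j hij a ≤ weightLE i j hij b := by
  refine iSup₂_le fun k hk => weightSpace_le i j hij b k ?_
  rw [Finset.mem_Icc] at hk ⊢
  constructor <;> omega

lemma toC_mem {d : ℕ} (i j : Fin (d+1)) (hij : i ≠ j) (q : MvPolynomial (Fin (d+1)) ℝ) (L : ℕ)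
    (hq : q.totalDegree ≤ L) : toC q ∈ weightLE i j hij L := by
  have : toC q = ∑ m ∈ q.support, toC (MvPolynomial.monomial m (q.coeff m)) := by
    conv_lhs => rw [q.as_sum]
    ext y
    simp only [toC, polyEval_sum, ContinuousMap.coe_mk, ContinuousMap.coe_sum, Finset.sum_apply,
      Complex.ofReal_sum]
  rw [this]
  refine Submodule.sum_mem _ fun m hm => weightLE_mono i j hij ?_ (toC_monomial_mem i j hij m _)
  exact (MvPolynomial.le_totalDegree hm).trans hq

/-- The rotation by the angle `π / (k - l)` multiplies the integrand by `-1`. -/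
lemma integral_weight_orthogonal {d : ℕ} {μ : Measure (Sph d)} (hμ : IsUniform μ)
    (i j : Fin (d+1)) (hij : i ≠ j) (k l : ℤ) (hkl : k ≠ l) (F G : C(Sph d, ℂ))
    (hF : F ∈ weightSpace i j hij k) (hG : G ∈ weightSpace i j hij l) :
    ∫ y, F y * star (G y) ∂μ = 0 := by
  have h0 : ((k - l : ℤ) : ℝ) ≠ 0 := by exact_mod_cast sub_ne_zero.mpr hkl
  have h0c : ((k : ℂ) - l) ≠ 0 := by exact_mod_cast sub_ne_zero.mpr hkl
  have := integral_sphereRot hμ (planeRot i j hij (Real.pi / ((k - l : ℤ) : ℝ)))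
    (f := fun y => F y * star (G y)) (by fun_prop)
  simp only [hF _ _, hG _ _] at this
  have hc : ∀ y, Complex.exp (k * ((Real.pi / ((k - l : ℤ) : ℝ) : ℝ) : ℂ) * Complex.I) * F y *
      star (Complex.exp (l * ((Real.pi / ((k - l : ℤ) : ℝ) : ℝ) : ℂ) * Complex.I) * G y)
      = - (F y * star (G y)) := by
    intro y
    have e : Complex.exp (k * ((Real.pi / ((k - l : ℤ) : ℝ) : ℝ) : ℂ) * Complex.I) *
        star (Complex.exp (l * ((Real.pi / ((k - l : ℤ) : ℝ) : ℝ) : ℂ) * Complex.I)) = -1 := by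
      rw [Complex.star_def, ← Complex.exp_conj, ← Complex.exp_add, ← Complex.exp_pi_mul_I]
      congr 1
      simp only [map_mul, Complex.conj_I, Complex.conj_ofReal, map_intCast]
      push_cast
      field_simp
      ring
    rw [star_mul']
    linear_combination (F y * star (G y)) * e
  simp only [hc, integral_neg] at this
  linear_combination (-1 / 2 : ℂ) * this

lemma integrable_of_continuousC {d : ℕ} {μ : Measure (Sph d)} [IsProbabilityMeasure μ]
    {f : Sph d → ℂ} (hf : Continuous f) : Integrable f μ :=
  hf.integrable_of_hasCompactSupport (HasCompactSupport.of_compactSpace f)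

/-- Parseval identity for a sum of weight functions with distinct weights. -/
lemma integral_sq_weight_sum {d : ℕ} {μ : Measure (Sph d)} (hμ : IsUniform μ)
    (i j : Fin (d+1)) (hij : i ≠ j) (s : Finset ℤ) (F : ℤ → C(Sph d, ℂ))
    (hF : ∀ k, F k ∈ weightSpace i j hij k) (c : ℤ → ℂ) (f : Sph d → ℝ)
    (hf : ∀ y, (f y : ℂ) = ∑ k ∈ s, c k * F k y) :
    ∫ y, f y ^ 2 ∂μ = ∑ k ∈ s, ‖c k‖ ^ 2 * ∫ y, ‖F k y‖ ^ 2 ∂μ := by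
  have := hμ.1
  have hc : ((∫ y, f y ^ 2 ∂μ : ℝ) : ℂ)
      = ((∑ k ∈ s, ‖c k‖ ^ 2 * ∫ y, ‖F k y‖ ^ 2 ∂μ : ℝ) : ℂ) := by
    rw [← integral_complex_ofReal]
    have e : ∀ y, ((f y ^ 2 : ℝ) : ℂ)
        = ∑ k ∈ s, ∑ l ∈ s, (c k * star (c l)) * (F k y * star (F l y)) := by
      intro y
      have h1 : ((f y ^ 2 : ℝ) : ℂ) = (f y : ℂ) * star (f y : ℂ) := by
        simp [sq, Complex.conj_ofReal]
      rw [h1, hf, star_sum, Finset.sum_mul_sum]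
      refine Finset.sum_congr rfl fun k _ => Finset.sum_congr rfl fun l _ => ?_
      rw [star_mul']
      ring
    simp only [e]
    rw [integral_finsetSum _ fun k _ => integrable_of_continuousC (by fun_prop)]
    push_cast
    refine Finset.sum_congr rfl fun k hk => ?_
    rw [integral_finsetSum _ fun k _ => integrable_of_continuousC (by fun_prop),
      Finset.sum_eq_single k]
    · rw [integral_const_mul, Complex.star_def, Complex.mul_conj, Complex.normSq_eq_norm_sq]
      push_cast
      congr 1
      rw [← integral_complex_ofReal]
      refine integral_congr_ae (ae_of_all _ fun y => ?_)
      beta_reduce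
      rw [Complex.mul_conj, Complex.normSq_eq_norm_sq]
    · intro l _ hl
      rw [integral_const_mul, integral_weight_orthogonal hμ i j hij k l hl.symm _ _ (hF k) (hF l),
        mul_zero]
    · exact fun h => absurd hk h
  exact_mod_cast hc

lemma hasDerivAt_planeRot {d : ℕ} (i j : Fin (d+1)) (hij : i ≠ j)
    (q : MvPolynomial (Fin (d+1)) ℝ) (y : Sph d) :
    HasDerivAt (fun s => polyEval q (sphereRot (planeRot i j hij s) y))
      (polyEval (rotD i j q) y) 0 := by
  unfold polyEval
  refine (hasDerivAt_eval q _ (fun k => if k = i then y.1 j else if k = j then - y.1 i else 0)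
    0 ?_).congr_deriv ?_
  · intro k
    simp only [planeRot_apply]
    split_ifs with h1 h2
    · exact (((Real.hasDerivAt_cos 0).mul_const _).add
        ((Real.hasDerivAt_sin 0).mul_const _)).congr_deriv (by simp)
    · exact (((Real.hasDerivAt_cos 0).mul_const _).sub
        ((Real.hasDerivAt_sin 0).mul_const _)).congr_deriv (by simp)
    · exact hasDerivAt_const _ _
  · have h0 : (fun k => (sphereRot (planeRot i j hij 0) y : EuclideanSpace ℝ (Fin (d+1))) k)
        = fun k => y.1 k := by
      ext k
      rw [planeRot_apply]
      split_ifs with h1 h2 <;> simp [*]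
    rw [h0, Fintype.sum_eq_add i j hij]
    · simp [hij.symm, rotD]
      ring
    · rintro k ⟨h1, h2⟩
      simp [h1, h2]

/-- Bernstein's inequality in `L²`: expand `q` into weight functions, on which `rotD i j` acts as
multiplication by `√-1 * k` with `|k| ≤ L`. -/
lemma bernstein_rotD {d : ℕ} {μ : Measure (Sph d)} (hμ : IsUniform μ) (i j : Fin (d+1))
    (q : MvPolynomial (Fin (d+1)) ℝ) (L : ℕ) (hq : q.totalDegree ≤ L) :
    ∫ y, polyEval (rotD i j q) y ^ 2 ∂μ ≤ (L : ℝ) ^ 2 * ∫ y, polyEval q y ^ 2 ∂μ := by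
  by_cases hij : i = j
  · subst hij
    have : rotD i i q = 0 := by simp [rotD]
    rw [this]
    simp only [polyEval, map_zero]
    simp only [ne_eq, OfNat.ofNat_ne_zero, not_false_eq_true, zero_pow, integral_zero]
    exact mul_nonneg (sq_nonneg _) (integral_nonneg fun _ => sq_nonneg _)
  obtain ⟨F', hF'⟩ := (Submodule.mem_iSup_finset_iff_exists_sum _ _).mp (toC_mem i j hij q L hq)
  set F : ℤ → C(Sph d, ℂ) := fun k => (F' k : C(Sph d, ℂ)) with hFdef
  have hF : ∀ k, F k ∈ weightSpace i j hij k := fun k => (F' k).2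
  have h1 : ∀ y, (polyEval q y : ℂ) = ∑ k ∈ Finset.Icc (-L : ℤ) L, F k y := by
    intro y
    have := congrArg (fun G : C(Sph d, ℂ) => G y) hF'
    simp only [ContinuousMap.coe_sum, Finset.sum_apply] at this
    exact this.symm
  have h2 : ∀ y, (polyEval (rotD i j q) y : ℂ)
      = ∑ k ∈ Finset.Icc (-L : ℤ) L, (k * Complex.I) * F k y := by
    intro y
    have ha := (hasDerivAt_planeRot i j hij q y).ofReal_comp
    have hb : HasDerivAt (fun s : ℝ => ∑ k ∈ Finset.Icc (-L : ℤ) L,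
        Complex.exp (k * s * Complex.I) * F k y)
        (∑ k ∈ Finset.Icc (-L : ℤ) L, (k * Complex.I) * F k y) 0 := by
      refine HasDerivAt.fun_sum fun k _ => HasDerivAt.mul_const ?_ _
      have hh : HasDerivAt (fun s : ℝ => (k * s * Complex.I : ℂ)) (k * Complex.I) 0 := by
        have := ((Complex.ofRealCLM.hasDerivAt (x := 0)).const_mul (k : ℂ)).mul_const Complex.I
        simpa using this
      simpa using hh.cexp
    refine ha.unique (hb.congr_of_eventuallyEq (Filter.Eventually.of_forall fun s => ?_))
    simp only
    rw [h1]
    exact Finset.sum_congr rfl fun k _ => hF k s y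
  rw [integral_sq_weight_sum hμ i j hij _ F hF (fun k => k * Complex.I) _ h2,
    integral_sq_weight_sum hμ i j hij _ F hF (fun _ => 1) _ (by simpa only [one_mul] using h1),
    Finset.mul_sum]
  refine Finset.sum_le_sum fun k hk => ?_
  rw [← mul_assoc]
  refine mul_le_mul_of_nonneg_right ?_ (integral_nonneg fun _ => sq_nonneg _)
  rw [Finset.mem_Icc] at hk
  have hk' : |(k : ℝ)| ≤ L := by
    rw [abs_le]
    exact_mod_cast hk
  simpa [sq_abs] using sq_le_sq' (by linarith [abs_nonneg (k : ℝ)]) hk'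

/-! ### Measure of caps -/

/-- Rotations and reflections act transitively on the sphere; here a reflection is used. -/
lemma exists_sphereRot_eq {d : ℕ} (x y : Sph d) :
    ∃ T : EuclideanSpace ℝ (Fin (d+1)) ≃ₗᵢ[ℝ] EuclideanSpace ℝ (Fin (d+1)),
      sphereRot T x = y := by
  have hx : ‖x.1‖ = 1 := mem_sphere_zero_iff_norm.mp x.2
  have hy : ‖y.1‖ = 1 := mem_sphere_zero_iff_norm.mp y.2
  exact ⟨_, Subtype.ext (Submodule.reflection_sub (hx.trans hy.symm))⟩

lemma measureReal_closedBall_eq {d : ℕ} {μ : Measure (Sph d)} (hμ : IsUniform μ) (x y : Sph d)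
    (r : ℝ) : μ.real (Metric.closedBall x r) = μ.real (Metric.closedBall y r) := by
  obtain ⟨T, hT⟩ := exists_sphereRot_eq x y
  rw [measureReal_def, measureReal_def]
  conv_rhs => rw [← hμ.2 T, Measure.map_apply (continuous_sphereRot T).measurable
    Metric.isClosed_closedBall.measurableSet]
  congr 2
  ext z
  simp only [Metric.mem_closedBall, Set.mem_preimage, ← hT, Subtype.dist_eq, sphereRot,
    LinearIsometryEquiv.dist_map]

lemma sum_sq_eq_one {d : ℕ} (x : Sph d) : ∑ i, x.1 i ^ 2 = 1 := by
  have hx : ‖x.1‖ = 1 := mem_sphere_zero_iff_norm.mp x.2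
  rw [← EuclideanSpace.real_norm_sq_eq, hx, one_pow]

lemma abs_coord_le_one {d : ℕ} (x : Sph d) (i : Fin (d+1)) : |x.1 i| ≤ 1 := by
  rw [← sq_le_one_iff_abs_le_one, ← sum_sq_eq_one x]
  exact Finset.single_le_sum (f := fun i => x.1 i ^ 2) (fun _ _ => sq_nonneg _) (Finset.mem_univ i)

lemma exists_large_coord {d : ℕ} (x : Sph d) : ∃ i, 1 / ((d : ℝ) + 1) ≤ |x.1 i| := by
  by_contra! h
  have h1 : ∑ i, x.1 i ^ 2 < ∑ _i : Fin (d+1), 1 / ((d : ℝ) + 1) := by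
    refine Finset.sum_lt_sum_of_nonempty Finset.univ_nonempty fun i _ => ?_
    rw [← sq_abs]
    nlinarith [h i, abs_nonneg (x.1 i), abs_coord_le_one x i]
  rw [sum_sq_eq_one] at h1
  have : (d : ℝ) + 1 ≠ 0 := by positivity
  simp [this] at h1

/-- Two points with a common large coordinate of the same sign are close as soon as their remaining
coordinates are. -/
lemma dist_le_of_coord {d : ℕ} (x y : Sph d) (i : Fin (d+1)) (m : ℝ) (hm : 0 < m)
    (hx : 1 / ((d : ℝ) + 1) ≤ |x.1 i|) (hy : 1 / ((d : ℝ) + 1) ≤ |y.1 i|)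
    (hs : 0 ≤ x.1 i ↔ 0 ≤ y.1 i)
    (h : ∀ j : Fin d, |x.1 (i.succAbove j) - y.1 (i.succAbove j)| ≤ 1 / m) :
    dist x y ≤ ((d : ℝ) + 1) ^ 2 / m := by
  have hd : (0 : ℝ) < d + 1 := by positivity
  have ex := sum_sq_eq_one x
  have ey := sum_sq_eq_one y
  rw [Fin.sum_univ_succAbove _ i] at ex ey
  have h1 : |x.1 i + y.1 i| = |x.1 i| + |y.1 i| := by
    rw [abs_add_eq_add_abs_iff]
    by_cases h0 : 0 ≤ x.1 i
    · exact Or.inl ⟨h0, hs.mp h0⟩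
    · exact Or.inr ⟨(not_le.mp h0).le, (not_le.mp fun h' => h0 (hs.mpr h')).le⟩
  have h2 : |x.1 i - y.1 i| * |x.1 i + y.1 i| ≤ 2 * d / m := by
    rw [← abs_mul]
    have e : (x.1 i - y.1 i) * (x.1 i + y.1 i) = ∑ j : Fin d,
        (y.1 (i.succAbove j) - x.1 (i.succAbove j)) * (y.1 (i.succAbove j) + x.1 (i.succAbove j)) := by
      have : ∀ j : Fin d, (y.1 (i.succAbove j) - x.1 (i.succAbove j)) *
        (y.1 (i.succAbove j) + x.1 (i.succAbove j))
          = y.1 (i.succAbove j) ^ 2 - x.1 (i.succAbove j) ^ 2 := fun j => by ring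
      simp only [this, Finset.sum_sub_distrib]
      linarith
    rw [e]
    refine (Finset.abs_sum_le_sum_abs _ _).trans ?_
    refine (Finset.sum_le_card_nsmul _ _ (2 / m) fun j _ => ?_).trans_eq ?_
    · rw [abs_mul, abs_sub_comm]
      have h3 : |y.1 (i.succAbove j) + x.1 (i.succAbove j)| ≤ 2 :=
        (abs_add_le _ _).trans ((add_le_add (abs_coord_le_one y _) (abs_coord_le_one x _)).trans
          (by norm_num))
      calc _ ≤ 1 / m * 2 := mul_le_mul (h j) h3 (abs_nonneg _) (by positivity)
        _ = 2 / m := by ring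
    · simp; ring
  have h3 : |x.1 i - y.1 i| ≤ d * (d + 1) / m := by
    have h4 : |x.1 i - y.1 i| * (2 / (d + 1)) ≤ 2 * d / m := by
      refine le_trans (mul_le_mul_of_nonneg_left ?_ (abs_nonneg _)) h2
      rw [h1]
      calc (2 : ℝ) / (d + 1) = 1 / (d + 1) + 1 / (d + 1) := by ring
        _ ≤ _ := add_le_add hx hy
    have h5 : |x.1 i - y.1 i| = |x.1 i - y.1 i| * (2 / (d + 1)) * ((d + 1) / 2) := by
      field_simp
    rw [h5]
    calc _ ≤ 2 * d / m * ((d + 1) / 2) := mul_le_mul_of_nonneg_right h4 (by positivity)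
      _ = _ := by ring
  rw [Subtype.dist_eq, EuclideanSpace.dist_eq]
  refine Real.sqrt_le_iff.mpr ⟨by positivity, ?_⟩
  rw [Fin.sum_univ_succAbove _ i]
  simp only [Real.dist_eq]
  have h6 : ∑ j : Fin d, |x.1 (i.succAbove j) - y.1 (i.succAbove j)| ^ 2 ≤ d * (1 / m) ^ 2 := by
    refine (Finset.sum_le_card_nsmul _ _ ((1 / m) ^ 2) fun j _ => ?_).trans_eq (by simp)
    exact pow_le_pow_left₀ (abs_nonneg _) (h j) 2
  have h7 := pow_le_pow_left₀ (abs_nonneg _) h3 2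
  refine (add_le_add h7 h6).trans ?_
  have : ((d : ℝ) * (d + 1) / m) ^ 2 + d * (1 / m) ^ 2 = ((d * (d + 1)) ^ 2 + d) / m ^ 2 := by ring
  rw [this, div_pow]
  refine div_le_div_of_nonneg_right ?_ (by positivity)
  have : (0 : ℝ) ≤ d := Nat.cast_nonneg d
  nlinarith [mul_nonneg this this, mul_nonneg this (mul_nonneg this this)]

/-- The constant in the lower bound `capConst d * r ^ d` for the measure of a cap of radius `r`. -/
def capConst (d : ℕ) : ℝ := 1 / (2 * (d + 1) * (6 * (d + 1) ^ 2) ^ d)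

lemma capConst_pos (d : ℕ) : 0 < capConst d := by unfold capConst; positivity

/-- The sphere is a union of `O(r ^ (-d))` sets of diameter at most `r`, and by rotation invariance
all caps of radius `r` have the same measure. -/
lemma capConst_le {d : ℕ} {μ : Measure (Sph d)} (hμ : IsUniform μ) (x : Sph d) (r : ℝ)
    (hr : 0 < r) (hr1 : r ≤ 1) : capConst d * r ^ d ≤ μ.real (Metric.closedBall x r) := by
  have := hμ.1
  obtain ⟨m, hm1, hm2⟩ : ∃ m : ℕ, ((d : ℝ) + 1) ^ 2 / r ≤ m ∧ (m : ℝ) ≤ 2 * ((d : ℝ) + 1) ^ 2 / r := by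
    refine ⟨⌈((d : ℝ) + 1) ^ 2 / r⌉₊, Nat.le_ceil _, ?_⟩
    have h1 := (Nat.ceil_lt_add_one (a := ((d : ℝ) + 1) ^ 2 / r) (by positivity)).le
    have h2 : 1 ≤ ((d : ℝ) + 1) ^ 2 / r := by
      rw [le_div_iff₀ hr]
      have : (0 : ℝ) ≤ d := Nat.cast_nonneg d
      nlinarith
    refine h1.trans ?_
    rw [mul_div_assoc]
    linarith
  have hm0 : (1 : ℝ) ≤ m := by
    refine le_trans ?_ hm1
    rw [le_div_iff₀ hr]
    have : (0 : ℝ) ≤ d := Nat.cast_nonneg d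
    nlinarith
  have hmpos : (0 : ℝ) < m := by linarith
  choose big hbig using exists_large_coord (d := d)
  have hfl : ∀ (y : Sph d) (j : Fin (d+1)), ⌊m * y.1 j⌋ ∈ Finset.Icc (-m : ℤ) m := by
    intro y j
    have h := abs_le.mp (abs_coord_le_one y j)
    rw [Finset.mem_Icc]
    constructor
    · rw [Int.le_floor]
      push_cast
      nlinarith
    · have : ((⌊m * y.1 j⌋ : ℤ) : ℝ) ≤ m := (Int.floor_le _).trans (by nlinarith)
      exact_mod_cast this
  -- A large coordinate, its sign, and the remaining coordinates rounded to multiples of `1 / m`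
  -- determine a point up to distance `r`.
  let code : Sph d → Fin (d+1) × Bool × (Fin d → Finset.Icc (-m : ℤ) m) := fun y =>
    (big y, decide (0 ≤ y.1 (big y)), fun j => ⟨⌊m * y.1 ((big y).succAbove j)⌋, hfl _ _⟩)
  have hcode : ∀ y z, code y = code z → dist y z ≤ r := by
    intro y z h
    simp only [code, Prod.mk.injEq] at h
    obtain ⟨h1, h2, h3⟩ := h
    refine (dist_le_of_coord y z (big y) m hmpos (hbig y) (h1 ▸ hbig z) ?_ ?_).trans ?_
    · rw [← h1] at h2
      simpa using h2
    · intro j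
      have h4 := congrArg (fun f : Fin d → Finset.Icc (-m : ℤ) m => (f j : ℤ)) h3
      simp only [← h1] at h4
      have h5 := (Int.abs_sub_lt_one_of_floor_eq_floor h4).le
      rw [← mul_sub, abs_mul, abs_of_pos hmpos] at h5
      rw [le_div_iff₀ hmpos, mul_comm]
      exact h5
    · rw [div_le_iff₀ hmpos, mul_comm, ← div_le_iff₀ hr]
      exact hm1
  have hcov : (1 : ℝ) ≤ (Fintype.card (Fin (d+1) × Bool × (Fin d → Finset.Icc (-m : ℤ) m)) : ℝ)
      * μ.real (Metric.closedBall x r) := by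
    have h1 : (Set.univ : Set (Sph d)) = ⋃ c, code ⁻¹' {c} := by
      ext y; simp
    have h2 := measureReal_iUnion_fintype_le (μ := μ) (fun c => code ⁻¹' {c})
    rw [← h1, probReal_univ] at h2
    refine h2.trans ((Finset.sum_le_card_nsmul _ _ (μ.real (Metric.closedBall x r))
      fun c _ => ?_).trans_eq (by rw [nsmul_eq_mul, Finset.card_univ]))
    rcases (code ⁻¹' {c}).eq_empty_or_nonempty with h | ⟨z, hz⟩
    · rw [h]; simp
    · rw [measureReal_closedBall_eq hμ x z]
      refine measureReal_mono fun y hy => ?_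
      exact hcode y z (hy.trans hz.symm)
  have hcard : (Fintype.card (Fin (d+1) × Bool × (Fin d → Finset.Icc (-m : ℤ) m)) : ℝ)
      = (d + 1) * (2 * (2 * m + 1) ^ d) := by
    simp only [Fintype.card_prod, Fintype.card_fin, Fintype.card_bool, Fintype.card_fun,
      Fintype.card_coe, Int.card_Icc]
    have : ((m : ℤ) + 1 - -m).toNat = 2 * m + 1 := by omega
    rw [this]
    push_cast
    ring
  rw [hcard] at hcov
  have hb : (2 * (m : ℝ) + 1) ≤ 6 * ((d : ℝ) + 1) ^ 2 / r := by
    calc (2 * (m : ℝ) + 1) ≤ 3 * m := by linarith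
      _ ≤ 3 * (2 * ((d : ℝ) + 1) ^ 2 / r) := by linarith
      _ = _ := by ring
  have hb2 := pow_le_pow_left₀ (by positivity) hb d
  rw [div_pow] at hb2
  unfold capConst
  rw [div_mul_eq_mul_div, one_mul, div_le_iff₀ (by positivity)]
  have h0 : 0 ≤ μ.real (Metric.closedBall x r) := measureReal_nonneg
  have hrd : 0 < r ^ d := by positivity
  calc r ^ d = r ^ d * 1 := by ring
    _ ≤ r ^ d * ((d + 1) * (2 * ((6 * ((d : ℝ) + 1) ^ 2) ^ d / r ^ d))
        * μ.real (Metric.closedBall x r)) := by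
      refine mul_le_mul_of_nonneg_left (hcov.trans ?_) hrd.le
      gcongr
    _ = _ := by field_simp

lemma isOpenPos_of_isUniform {d : ℕ} {μ : Measure (Sph d)} (hμ : IsUniform μ) :
    μ.IsOpenPosMeasure := by
  have := hμ.1
  refine ⟨fun U hU ⟨x, hx⟩ h0 => ?_⟩
  obtain ⟨r, hr, hrU⟩ := Metric.nhds_basis_closedBall.mem_iff.mp (hU.mem_nhds hx)
  have h1 := capConst_le hμ x (min r 1) (by positivity) (min_le_right _ _)
  have h2 : μ.real (Metric.closedBall x (min r 1)) ≤ μ.real U :=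
    measureReal_mono ((Metric.closedBall_subset_closedBall (min_le_left _ _)).trans hrU)
  have h3 : μ.real U = 0 := by rw [measureReal_def, h0]; rfl
  have h4 : 0 < capConst d * (min r 1) ^ d := mul_pos (capConst_pos d) (by positivity)
  linarith

lemma exists_rotate_poly {d : ℕ}
    (T : EuclideanSpace ℝ (Fin (d+1)) ≃ₗᵢ[ℝ] EuclideanSpace ℝ (Fin (d+1)))
    (q : MvPolynomial (Fin (d+1)) ℝ) :
    ∃ q' : MvPolynomial (Fin (d+1)) ℝ, q'.totalDegree ≤ q.totalDegree ∧
      ∀ y, polyEval q' y = polyEval q (sphereRot T y) := by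
  classical
  let l : Fin (d+1) → MvPolynomial (Fin (d+1)) ℝ := fun i =>
    ∑ j, MvPolynomial.C (T (EuclideanSpace.single j 1) i) * MvPolynomial.X j
  have hl : ∀ i, (l i).totalDegree ≤ 1 := by
    intro i
    refine MvPolynomial.totalDegree_finsetSum_le fun j _ => ?_
    refine (MvPolynomial.totalDegree_mul _ _).trans ?_
    simp
  refine ⟨MvPolynomial.bind₁ l q, ?_, fun y => ?_⟩
  · conv_lhs => rw [q.as_sum, map_sum]
    refine MvPolynomial.totalDegree_finsetSum_le fun m hm => ?_
    rw [MvPolynomial.bind₁_monomial]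
    refine (MvPolynomial.totalDegree_mul _ _).trans ?_
    rw [MvPolynomial.totalDegree_C, zero_add]
    refine le_trans ?_ (MvPolynomial.le_totalDegree hm)
    refine (MvPolynomial.totalDegree_finsetProd _ _).trans (Finset.sum_le_sum fun i _ => ?_)
    refine (MvPolynomial.totalDegree_pow _ _).trans ?_
    simpa using Nat.mul_le_mul_left (m i) (hl i)
  · unfold polyEval
    rw [← MvPolynomial.coe_aeval_eq_eval, ← MvPolynomial.coe_aeval_eq_eval]
    change MvPolynomial.aeval _ (MvPolynomial.bind₁ l q) = MvPolynomial.aeval _ q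
    rw [MvPolynomial.aeval_bind₁]
    congr 2
    ext i
    have hy : y.1 = ∑ j, y.1 j • EuclideanSpace.single j (1 : ℝ) := by
      ext k
      simp [Pi.single_apply]
    simp only [sphereRot]
    conv_rhs => rw [hy]
    simp [l, mul_comm]

/-! ### Reproducing kernel of the polynomials of bounded degree -/

/-- Restriction of polynomials to the sphere, as a linear map into the continuous functions. -/
def polyC (d : ℕ) : MvPolynomial (Fin (d+1)) ℝ →ₗ[ℝ] C(Sph d, ℝ) where
  toFun q := ⟨polyEval q, continuous_polyEval q⟩
  map_add' p q := by ext y; simp [polyEval_add]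
  map_smul' c q := by ext y; simp [polyEval_smul]

/-- Polynomials in the last `d` coordinates with all exponents at most `m`, given by their
coefficients. -/
def boxPoly (d m : ℕ) : ((Fin d → Fin (m+1)) → ℝ) →ₗ[ℝ] MvPolynomial (Fin (d+1)) ℝ where
  toFun c := MvPolynomial.rename Fin.succ (∑ e : Fin d → Fin (m+1),
    MvPolynomial.monomial (Finsupp.equivFunOnFinite.symm fun j => (e j : ℕ)) (c e))
  map_add' c c' := by simp [Finset.sum_add_distrib]
  map_smul' a c := by
    simp only [Pi.smul_apply, RingHom.id_apply, ← map_smul, Finset.smul_sum,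
      smul_eq_mul]

lemma totalDegree_boxPoly_le {d m : ℕ} (c : (Fin d → Fin (m+1)) → ℝ) :
    (boxPoly d m c).totalDegree ≤ d * m := by
  refine (MvPolynomial.totalDegree_rename_le _ _).trans ?_
  refine MvPolynomial.totalDegree_finsetSum_le fun e _ => ?_
  refine (MvPolynomial.totalDegree_monomial_le _ _).trans ?_
  change Finsupp.sum _ (fun _ e => e) ≤ _
  rw [Finsupp.sum_fintype _ _ (by simp)]
  refine (Finset.sum_le_card_nsmul _ _ m fun j _ => ?_).trans_eq (by simp)
  simpa using Nat.le_of_lt_succ (e j).2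

/-- The first coordinate can be solved for, so a polynomial in the remaining ones that vanishes on
the sphere vanishes on a cube. -/
lemma boxPoly_injective {d : ℕ} (hd : 1 ≤ d) (m : ℕ) (c : (Fin d → Fin (m+1)) → ℝ)
    (h : ∀ y : Sph d, polyEval (boxPoly d m c) y = 0) : c = 0 := by
  have hd' : (1 : ℝ) ≤ d := by exact_mod_cast hd
  set q : MvPolynomial (Fin d) ℝ := ∑ e : Fin d → Fin (m+1),
    MvPolynomial.monomial (Finsupp.equivFunOnFinite.symm fun j => (e j : ℕ)) (c e) with hq
  have hq0 : q = 0 := by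
    refine MvPolynomial.funext_set (fun _ => Set.Icc (0 : ℝ) (1 / d))
      (fun _ => Set.Icc_infinite (by positivity)) fun u hu => ?_
    have hu' : ∀ j, 0 ≤ u j ∧ u j ≤ 1 / d := fun j => hu j (Set.mem_univ j)
    have hs : ∑ j, u j ^ 2 ≤ 1 := by
      refine (Finset.sum_le_card_nsmul _ _ (1 / (d : ℝ)) fun j _ => ?_).trans_eq ?_
      · have h1 : (1 : ℝ) / d ≤ 1 := by
          rw [div_le_one (by linarith)]; exact hd'
        nlinarith [hu' j]
      · rw [nsmul_eq_mul, Finset.card_univ, Fintype.card_fin]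
        field_simp
    let y : Sph d := ⟨WithLp.toLp 2 (Fin.cons (Real.sqrt (1 - ∑ j, u j ^ 2)) u), by
      rw [mem_sphere_zero_iff_norm, EuclideanSpace.norm_eq, Real.sqrt_eq_one, Fin.sum_univ_succ]
      simp [Real.sq_sqrt (sub_nonneg.mpr hs)]⟩
    have := h y
    simp only [polyEval, boxPoly, LinearMap.coe_mk, AddHom.coe_mk, MvPolynomial.eval_rename] at this
    rw [map_zero, ← this]
    rfl
  funext e
  have h1 := congrArg (MvPolynomial.coeff (Finsupp.equivFunOnFinite.symm fun j => (e j : ℕ))) hq0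
  rw [hq, MvPolynomial.coeff_sum, Finset.sum_eq_single e] at h1
  · simpa using h1
  · intro e' _ he
    rw [MvPolynomial.coeff_monomial, if_neg]
    intro h2
    apply he
    funext j
    have := DFunLike.congr_fun h2 j
    exact Fin.ext (by simpa using this)
  · simp

lemma integral_sum_continuous {d : ℕ} {μ : Measure (Sph d)} [IsProbabilityMeasure μ] {ι : Type*}
    (s : Finset ι) (f : ι → Sph d → ℝ) (hf : ∀ i, Continuous (f i)) :
    ∫ y, ∑ i ∈ s, f i y ∂μ = ∑ i ∈ s, ∫ y, f i y ∂μ :=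
  integral_finsetSum _ fun i _ => integrable_of_continuous (hf i)

/-- An `L²`-orthonormal basis of the restrictions to the sphere of polynomials of degree at most
`k`; the dimension is at least `(k / d) ^ d`. -/
lemma exists_onb {d : ℕ} (hd : 1 ≤ d) {μ : Measure (Sph d)} (hμ : IsUniform μ) (k : ℕ) :
    ∃ (N : ℕ) (e : Fin N → MvPolynomial (Fin (d+1)) ℝ), ((k : ℝ) / d) ^ d ≤ N ∧
      (∀ i, (e i).totalDegree ≤ k) ∧
      (∀ i j, ∫ y, polyEval (e i) y * polyEval (e j) y ∂μ = if i = j then 1 else 0) ∧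
      ∀ f : MvPolynomial (Fin (d+1)) ℝ, f.totalDegree ≤ k → ∀ z : Sph d,
        polyEval f z = ∑ i, (∫ y, polyEval f y * polyEval (e i) y ∂μ) * polyEval (e i) z := by
  have := hμ.1
  have := isOpenPos_of_isUniform hμ
  let Ψ : MvPolynomial (Fin (d+1)) ℝ →ₗ[ℝ] Lp ℝ 2 μ :=
    (ContinuousMap.toLp 2 μ ℝ).toLinearMap ∘ₗ polyC d
  have hΨ : ∀ p q, Ψ p = Ψ q → ∀ z, polyEval p z = polyEval q z := by
    intro p q h z
    have := ContinuousMap.toLp_injective (p := 2) (𝕜 := ℝ) μ h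
    exact congrArg (fun F : C(Sph d, ℝ) => F z) this
  have hin : ∀ p q, inner ℝ (Ψ p) (Ψ q) = ∫ y, polyEval q y * polyEval p y ∂μ := by
    intro p q
    have := ContinuousMap.inner_toLp (𝕜 := ℝ) μ (polyC d p) (polyC d q)
    exact this
  let W : Submodule ℝ (Lp ℝ 2 μ) := (MvPolynomial.restrictTotalDegree (Fin (d+1)) ℝ k).map Ψ
  let b := stdOrthonormalBasis ℝ W
  have hb : ∀ i, ∃ q : MvPolynomial (Fin (d+1)) ℝ, q.totalDegree ≤ k ∧ Ψ q = b i := by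
    intro i
    obtain ⟨q, hq, h⟩ := (b i).2
    exact ⟨q, (MvPolynomial.mem_restrictTotalDegree _ _ _).mp hq, h⟩
  choose e he1 he2 using hb
  refine ⟨_, e, ?_, he1, ?_, ?_⟩
  · set m := k / d
    have hmem : ∀ c, Ψ (boxPoly d m c) ∈ W := fun c => Submodule.mem_map_of_mem
      ((MvPolynomial.mem_restrictTotalDegree _ _ _).mpr
        ((totalDegree_boxPoly_le c).trans (Nat.mul_div_le k d)))
    let A : ((Fin d → Fin (m+1)) → ℝ) →ₗ[ℝ] W := (Ψ ∘ₗ boxPoly d m).codRestrict W hmem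
    have hA : Function.Injective A := by
      rw [← LinearMap.ker_eq_bot, LinearMap.ker_eq_bot']
      intro c hc
      refine boxPoly_injective hd m c fun y => ?_
      have h1 : Ψ (boxPoly d m c) = Ψ 0 := by
        rw [map_zero]
        exact congrArg Subtype.val hc
      rw [hΨ _ _ h1 y]
      simp [polyEval]
    have h1 := LinearMap.finrank_le_finrank_of_injective hA
    rw [Module.finrank_pi, Fintype.card_fun, Fintype.card_fin, Fintype.card_fin] at h1
    have h2 : (((m + 1) ^ d : ℕ) : ℝ) ≤ (Module.finrank ℝ W : ℝ) := by exact_mod_cast h1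
    refine le_trans ?_ h2
    push_cast
    refine pow_le_pow_left₀ (by positivity) ?_ d
    rw [div_le_iff₀ (by exact_mod_cast hd)]
    have := (Nat.lt_mul_div_succ k (show 0 < d by omega)).le
    have h3 : (k : ℝ) ≤ d * ((k / d : ℕ) + 1) := by exact_mod_cast this
    linarith
  · intro i j
    rw [← hin, he2, he2]
    have := orthonormal_iff_ite.mp b.orthonormal j i
    rw [Submodule.coe_inner] at this
    rw [this]
    simp [eq_comm]
  · intro f hf z
    have hfW : Ψ f ∈ W := Submodule.mem_map_of_mem ((MvPolynomial.mem_restrictTotalDegree _ _ _).mpr hf)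
    have h1 := congrArg Subtype.val (b.sum_repr' ⟨Ψ f, hfW⟩)
    have h2 : Ψ f = Ψ (∑ i, (∫ y, polyEval f y * polyEval (e i) y ∂μ) • e i) := by
      rw [map_sum]
      simp only [map_smul, he2]
      refine h1.symm.trans ?_
      simp only [Submodule.coe_sum, Submodule.coe_smul, Submodule.coe_inner, ← he2, hin]
    rw [hΨ _ _ h2 z, polyEval_sum]
    simp only [polyEval_smul]

/-- The reproducing kernel of the polynomials of degree at most `k`, peaked at an arbitrary point
`y`; its maximal diagonal value `M` is at least the dimension of the space. -/
lemma exists_peak {d : ℕ} (hd : 1 ≤ d) {μ : Measure (Sph d)} (hμ : IsUniform μ) (k : ℕ) :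
    ∃ M : ℝ, ((k : ℝ) / d) ^ d ≤ M ∧ 0 ≤ M ∧
      (∀ f : MvPolynomial (Fin (d+1)) ℝ, f.totalDegree ≤ k → ∀ z : Sph d,
        polyEval f z ^ 2 ≤ M * ∫ y, polyEval f y ^ 2 ∂μ) ∧
      ∀ y : Sph d, ∃ p : MvPolynomial (Fin (d+1)) ℝ, p.totalDegree ≤ k ∧ polyEval p y = M ∧
        ∫ z, polyEval p z ^ 2 ∂μ = M := by
  have := hμ.1
  obtain ⟨N, e, hN, hdeg, hon, hexp⟩ := exists_onb hd hμ k
  have hne : Nonempty (Sph d) := by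
    by_contra h
    rw [not_nonempty_iff] at h
    have h1 := measure_univ (μ := μ)
    rw [Set.univ_eq_empty_iff.mpr h] at h1
    simp at h1
  let K : Sph d → ℝ := fun z => ∑ i, polyEval (e i) z ^ 2
  have hK : Continuous K := continuous_finsetSum _ fun i _ => (continuous_polyEval _).pow 2
  obtain ⟨y₀, hy₀⟩ := hK.exists_forall_ge_of_hasCompactSupport (HasCompactSupport.of_compactSpace K)
  have hcont := fun q : MvPolynomial (Fin (d+1)) ℝ => continuous_polyEval (d := d) q
  have hbes : ∀ f : MvPolynomial (Fin (d+1)) ℝ, f.totalDegree ≤ k →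
      ∫ y, polyEval f y ^ 2 ∂μ = ∑ i, (∫ y, polyEval f y * polyEval (e i) y ∂μ) ^ 2 := by
    intro f hf
    have h1 : ∀ z : Sph d, polyEval f z ^ 2 = ∑ i, (∫ y, polyEval f y * polyEval (e i) y ∂μ) *
        (polyEval f z * polyEval (e i) z) := by
      intro z
      rw [sq]
      nth_rewrite 2 [hexp f hf z]
      rw [Finset.mul_sum]
      exact Finset.sum_congr rfl fun i _ => by ring
    simp only [h1]
    rw [integral_sum_continuous _ (fun i z => (∫ y, polyEval f y * polyEval (e i) y ∂μ) *
        (polyEval f z * polyEval (e i) z)) fun i => ((hcont f).mul (hcont (e i))).const_mul _]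
    exact Finset.sum_congr rfl fun i _ => by rw [integral_const_mul, sq]
  refine ⟨K y₀, ?_, Finset.sum_nonneg fun _ _ => sq_nonneg _, ?_, ?_⟩
  · refine hN.trans ?_
    have h1 : ∫ z, K z ∂μ = N := by
      refine (integral_sum_continuous _ (fun i z => polyEval (e i) z ^ 2)
        fun i => (hcont _).pow 2).trans ?_
      simp only [sq, hon]
      simp
    rw [← h1]
    refine (integral_mono (integrable_of_continuous hK) (integrable_const (K y₀)) hy₀).trans_eq ?_
    simp
  · intro f hf z
    rw [hexp f hf z, hbes f hf, mul_comm]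
    refine (Finset.sum_mul_sq_le_sq_mul_sq _ _ _).trans ?_
    exact mul_le_mul_of_nonneg_left (hy₀ z) (Finset.sum_nonneg fun _ _ => sq_nonneg _)
  · intro y
    obtain ⟨T, hT⟩ := exists_sphereRot_eq y y₀
    let p₀ : MvPolynomial (Fin (d+1)) ℝ := ∑ i, polyEval (e i) y₀ • e i
    have hp₀ : p₀.totalDegree ≤ k := MvPolynomial.totalDegree_finsetSum_le fun i _ =>
      (MvPolynomial.totalDegree_smul_le _ _).trans (hdeg i)
    obtain ⟨p, hp, hpe⟩ := exists_rotate_poly T p₀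
    refine ⟨p, hp.trans hp₀, ?_, ?_⟩
    · rw [hpe, hT, polyEval_sum]
      exact Finset.sum_congr rfl fun i _ => by rw [polyEval_smul, sq]
    · simp only [hpe]
      rw [integral_sphereRot hμ T (f := fun z => polyEval p₀ z ^ 2) ((hcont p₀).pow 2), hbes p₀ hp₀]
      refine Finset.sum_congr rfl fun i _ => ?_
      congr 1
      simp only [p₀, polyEval_sum, polyEval_smul, Finset.sum_mul, mul_assoc]
      rw [integral_sum_continuous _ (fun j y => polyEval (e j) y₀ *
        (polyEval (e j) y * polyEval (e i) y)) fun j => ((hcont (e j)).mul (hcont (e i))).const_mul _]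
      simp only [integral_const_mul, hon]
      simp

/-! ### Local control of a polynomial by its derivatives -/

lemma integral_gradSq_le {d : ℕ} {μ : Measure (Sph d)} (hμ : IsUniform μ) (L k : ℕ)
    (q : MvPolynomial (Fin (d+1)) ℝ) (hq : q.totalDegree ≤ L) :
    ∫ y, gradSq k q y ∂μ ≤ ((((d : ℝ) + 1) * L) ^ 2) ^ k * ∫ y, polyEval q y ^ 2 ∂μ := by
  have := hμ.1
  induction k generalizing q with
  | zero => simp [gradSq]
  | succ k ih =>
    simp only [gradSq]
    rw [integral_sum_continuous _ (fun (p : Fin (d+1) × Fin (d+1)) y => gradSq k (rotD p.1 p.2 q) y)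
      fun p => continuous_gradSq _ _]
    refine (Finset.sum_le_card_nsmul _ _
      (((((d : ℝ) + 1) * L) ^ 2) ^ k * ((L : ℝ) ^ 2 * ∫ y, polyEval q y ^ 2 ∂μ))
      fun p _ => ?_).trans_eq ?_
    · refine (ih _ ((totalDegree_rotD_le _ _ _).trans hq)).trans ?_
      exact mul_le_mul_of_nonneg_left (bernstein_rotD hμ _ _ q L hq) (by positivity)
    · rw [nsmul_eq_mul, Finset.card_univ, Fintype.card_prod, Fintype.card_fin]
      push_cast
      ring

/-- `hM` passes from `f` to all its iterated derivatives, since these have degree at most `L` too. -/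
lemma gradSq_sup_le {d : ℕ} {μ : Measure (Sph d)} (hμ : IsUniform μ) (L k : ℕ)
    (q : MvPolynomial (Fin (d+1)) ℝ) (hq : q.totalDegree ≤ L) (M : ℝ) (hM0 : 0 ≤ M)
    (hM : ∀ f : MvPolynomial (Fin (d+1)) ℝ, f.totalDegree ≤ L → ∀ z : Sph d,
        polyEval f z ^ 2 ≤ M * ∫ y, polyEval f y ^ 2 ∂μ) (z : Sph d) :
    gradSq k q z ≤ M * (((((d : ℝ) + 1) * L) ^ 2) ^ k * ∫ y, polyEval q y ^ 2 ∂μ) := by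
  have := hμ.1
  refine le_trans ?_ (mul_le_mul_of_nonneg_left (integral_gradSq_le hμ L k q hq) hM0)
  induction k generalizing q with
  | zero => exact hM q hq z
  | succ k ih =>
    simp only [gradSq]
    rw [integral_sum_continuous _ (fun (p : Fin (d+1) × Fin (d+1)) y => gradSq k (rotD p.1 p.2 q) y)
      fun p => continuous_gradSq _ _, Finset.mul_sum]
    exact Finset.sum_le_sum fun p _ => ih _ ((totalDegree_rotD_le _ _ _).trans hq)

/-- `x` is reached from `y` along a great circle of arc length `s ≤ 2 * dist x y` with unit initial
velocity `v`. -/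
lemma exists_geodesic {d : ℕ} (hd : 1 ≤ d) (x y : Sph d) :
    ∃ (s : ℝ) (v : Fin (d+1) → ℝ), 0 ≤ s ∧ s ≤ 2 * dist x y ∧ ∑ i, v i ^ 2 = 1 ∧
      ∑ i, v i * y.1 i = 0 ∧ ∀ i, x.1 i = Real.cos s * y.1 i + Real.sin s * v i := by
  have hx : ‖x.1‖ = 1 := mem_sphere_zero_iff_norm.mp x.2
  have hy : ‖y.1‖ = 1 := mem_sphere_zero_iff_norm.mp y.2
  set c : ℝ := inner ℝ x.1 y.1 with hc
  have hc1 : |c| ≤ 1 := by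
    have := abs_real_inner_le_norm x.1 y.1
    rwa [hx, hy, one_mul] at this
  obtain ⟨hc2, hc3⟩ := abs_le.mp hc1
  set s := Real.arccos c
  have hcos : Real.cos s = c := Real.cos_arccos hc2 hc3
  have hs0 : 0 ≤ s := Real.arccos_nonneg c
  have hsin : Real.sin s ^ 2 = 1 - c ^ 2 := by rw [Real.sin_sq, hcos]
  have hdist : s ≤ 2 * dist x y := by
    have h1 : dist x y ^ 2 = 2 - 2 * c := by
      rw [Subtype.dist_eq, dist_eq_norm, norm_sub_sq_real, hx, hy, hc]; ring
    have h3 : c ≤ 1 - 2 / Real.pi ^ 2 * s ^ 2 := by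
      rw [← hcos]
      refine Real.cos_le_one_sub_mul_cos_sq ?_
      rw [abs_of_nonneg hs0]
      exact Real.arccos_le_pi c
    have h4 : (1 : ℝ) / 8 ≤ 2 / Real.pi ^ 2 := by
      rw [div_le_div_iff₀ (by norm_num) (by positivity)]
      nlinarith [Real.pi_pos, Real.pi_le_four]
    have h5 := mul_le_mul_of_nonneg_right h4 (sq_nonneg s)
    refine abs_le_of_sq_le_sq' ?_ (by positivity) |>.2
    rw [mul_pow, h1]
    linarith
  have hexp : ‖x.1 - c • y.1‖ ^ 2 = Real.sin s ^ 2 := by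
    rw [norm_sub_sq_real, real_inner_smul_right, norm_smul, hx, hy, hsin, ← hc]
    rw [Real.norm_eq_abs, mul_one, sq_abs]
    ring
  have hfin : ∃ v : EuclideanSpace ℝ (Fin (d+1)), ‖v‖ = 1 ∧ inner ℝ v y.1 = 0 ∧
      x.1 = Real.cos s • y.1 + Real.sin s • v := by
    by_cases h0 : Real.sin s = 0
    · have hy0 : y.1 ≠ 0 := by
        intro h; rw [h, norm_zero] at hy; exact zero_ne_one hy
      have : Fact (Module.finrank ℝ (EuclideanSpace ℝ (Fin (d+1))) = d + 1) := ⟨by simp⟩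
      have h1 := Submodule.finrank_orthogonal_span_singleton (𝕜 := ℝ) (n := d) hy0
      have : Nontrivial (Submodule.span ℝ {y.1})ᗮ :=
        Module.nontrivial_of_finrank_pos (R := ℝ) (by rw [h1]; omega)
      obtain ⟨w, hw⟩ := exists_norm_eq (Submodule.span ℝ {y.1})ᗮ zero_le_one
      refine ⟨w, hw, ?_, ?_⟩
      · rw [real_inner_comm]
        exact Submodule.mem_orthogonal_singleton_iff_inner_right.mp w.2
      · rw [h0, zero_smul, add_zero, hcos, ← sub_eq_zero, ← norm_eq_zero]
        rw [h0] at hexp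
        simpa using hexp
    · refine ⟨(Real.sin s)⁻¹ • (x.1 - c • y.1), ?_, ?_, ?_⟩
      · rw [norm_smul, ← sq_eq_sq₀ (by positivity) zero_le_one, mul_pow, hexp, norm_inv, inv_pow,
          Real.norm_eq_abs, sq_abs]
        field_simp
      · rw [real_inner_smul_left, inner_sub_left, real_inner_smul_left, real_inner_self_eq_norm_sq,
          hy, ← hc]
        ring
      · rw [smul_smul, mul_inv_cancel₀ h0, one_smul, hcos]
        abel
  obtain ⟨v, hv1, hv2, hv3⟩ := hfin
  refine ⟨s, fun i => v i, hs0, hdist, ?_, ?_, fun i => ?_⟩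
  · rw [← EuclideanSpace.real_norm_sq_eq, hv1, one_pow]
  · rw [← hv2, PiLp.inner_apply]
    simp [mul_comm]
  · rw [hv3]; rfl

/-- Taylor expansion at `y` along the great circle from `y` to `x`. -/
lemma taylor_sphere {d : ℕ} (hd : 1 ≤ d) (f : MvPolynomial (Fin (d+1)) ℝ) (x y : Sph d) (K : ℕ)
    (B : ℝ) (hB0 : 0 ≤ B) (hB : ∀ z : Sph d, gradSq K f z ≤ B ^ 2) :
    ∃ (s : ℝ) (c : ℕ → ℝ), 0 ≤ s ∧ s ≤ 2 * dist x y ∧ (∀ k, c k ^ 2 ≤ gradSq k f y) ∧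
      c 0 = polyEval f y ∧
      |polyEval f x - ∑ k ∈ Finset.range K, s ^ k / k.factorial * c k|
        ≤ B * (s ^ K / K.factorial) := by
  obtain ⟨s, v, hs, hsd, hv, hvy, hx⟩ := exists_geodesic hd x y
  have hy1 := sum_sq_eq_one y
  let γ : ℝ → Sph d := fun u => ⟨WithLp.toLp 2 fun i => Real.cos u * y.1 i + Real.sin u * v i, by
    rw [mem_sphere_zero_iff_norm, ← sq_eq_sq₀ (norm_nonneg _) zero_le_one,
      EuclideanSpace.real_norm_sq_eq]
    have : ∀ i, (Real.cos u * y.1 i + Real.sin u * v i) ^ 2 = Real.cos u ^ 2 * y.1 i ^ 2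
      + 2 * Real.cos u * Real.sin u * (v i * y.1 i) + Real.sin u ^ 2 * v i ^ 2 := fun i => by ring
    simp only [this, Finset.sum_add_distrib, ← Finset.mul_sum, hv, hvy, hy1]
    simp⟩
  have hγ0 : γ 0 = y := by
    refine Subtype.ext ?_
    ext i
    simp [γ]
  have hγs : γ s = x := by
    refine Subtype.ext ?_
    ext i
    exact (hx i).symm
  refine ⟨s, fun k => polyEval ((dirD v fun i => y.1 i)^[k] f) y, hs, hsd,
    fun k => dirD_iterate_sq_le _ _ hv hy1 k f y, rfl, ?_⟩
  have h1 := taylor_bound (fun k u => polyEval ((dirD v fun i => y.1 i)^[k] f) (γ u))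
    (fun k u => by
      have := hasDerivAt_geodesic v (fun i => y.1 i) hv hy1 hvy ((dirD v fun i => y.1 i)^[k] f) u
      simp only [Function.iterate_succ_apply']
      exact this) K B
    (fun u => abs_le_of_sq_le_sq ((dirD_iterate_sq_le _ _ hv hy1 K f (γ u)).trans (hB _)) hB0)
    s hs
  simpa only [hγ0, hγs, Function.iterate_zero_apply] using h1

/-- A continuous majorant `H` of `f ²` over caps of radius comparable to `1 / L`, of total mass at
most a constant times `∫ f ²`. -/
lemma exists_local_majorant {d : ℕ} (hd : 1 ≤ d) {μ : Measure (Sph d)} (hμ : IsUniform μ) (L : ℕ)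
    (hL : 1 ≤ L) (f : MvPolynomial (Fin (d+1)) ℝ) (hf : f.totalDegree ≤ L) :
    ∃ H : Sph d → ℝ, Continuous H ∧ (∀ y, 0 ≤ H y) ∧
      ∫ y, H y ∂μ ≤ 10 * ∫ y, polyEval f y ^ 2 ∂μ ∧
      ∀ x y : Sph d, dist x y ≤ 1 / (8 * (d + 1) * L) → polyEval f x ^ 2 ≤ H y := by
  have := hμ.1
  obtain ⟨M, -, hM0, hM, -⟩ := exists_peak hd hμ L
  set I := ∫ y, polyEval f y ^ 2 ∂μ with hI
  have hI0 : 0 ≤ I := integral_nonneg fun y => sq_nonneg _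
  set A : ℝ := ((d : ℝ) + 1) * L with hA
  have hL' : (1 : ℝ) ≤ L := by exact_mod_cast hL
  have hApos : 0 < A := by positivity
  obtain ⟨K, hK⟩ := pow_unbounded_of_one_lt M (show (1 : ℝ) < 4 by norm_num)
  have hgeo : ∀ K : ℕ, ∑ k ∈ Finset.range K, (1 / 4 : ℝ) ^ k ≤ 2 := by
    intro K
    have : (1 / 4 : ℝ) ≠ 1 := by norm_num
    rw [geom_sum_eq this]
    have h0 : (0 : ℝ) ≤ (1 / 4) ^ K := by positivity
    rw [div_le_iff_of_neg (by norm_num)]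
    linarith
  let G : Sph d → ℝ := fun y => ∑ k ∈ Finset.range K, (1 / (2 * A) ^ 2) ^ k * gradSq k f y
  have hG : Continuous G :=
    continuous_finsetSum _ fun k _ => (continuous_gradSq k f).const_mul _
  have hG0 : ∀ y, 0 ≤ G y := fun y => Finset.sum_nonneg fun k _ =>
    mul_nonneg (by positivity) (gradSq_nonneg _ _ _)
  refine ⟨fun y => 4 * G y + 2 * I, by fun_prop, fun y => by linarith [hG0 y], ?_, ?_⟩
  · have h1 : ∫ y, G y ∂μ ≤ 2 * I := by
      refine (integral_sum_continuous _ (fun k y => (1 / (2 * A) ^ 2) ^ k * gradSq k f y)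
        fun k => (continuous_gradSq k f).const_mul _).trans_le ?_
      refine le_trans ?_ (mul_le_mul_of_nonneg_right (hgeo K) hI0)
      rw [Finset.sum_mul]
      refine Finset.sum_le_sum fun k _ => ?_
      rw [integral_const_mul]
      refine (mul_le_mul_of_nonneg_left (integral_gradSq_le hμ L k f hf)
        (by positivity)).trans_eq ?_
      rw [← mul_assoc, ← mul_pow]
      rw [← hA]
      congr 2
      field_simp
      norm_num
    rw [integral_add (integrable_of_continuous (hG.const_mul 4)) (integrable_const _),
      integral_const_mul, integral_const, probReal_univ, smul_eq_mul]
    linarith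
  · intro x y hxy
    obtain ⟨s, c, hs0, hs, hc, -, hT⟩ := taylor_sphere hd f x y K
      (Real.sqrt (M * ((A ^ 2) ^ K * I))) (Real.sqrt_nonneg _) (fun z => by
        rw [Real.sq_sqrt (by positivity)]
        exact gradSq_sup_le hμ L K f hf M hM0 hM z)
    have hsA : s * A ≤ 1 / 4 := by
      have h1 : s ≤ 2 * (1 / (8 * (d + 1) * L)) := hs.trans (by linarith)
      refine (mul_le_mul_of_nonneg_right h1 hApos.le).trans_eq ?_
      rw [hA]
      field_simp
      norm_num
    have hfac : ∀ k : ℕ, (1 : ℝ) ≤ k.factorial := fun k => by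
      exact_mod_cast Nat.one_le_iff_ne_zero.mpr k.factorial_ne_zero
    -- `f x` is the Taylor sum `S` plus a remainder; the radius makes `(2 * s * A) ^ k ≤ 2 ^ (-k)`,
    -- and `K` was chosen so that the remainder is negligible.
    set S := ∑ k ∈ Finset.range K, s ^ k / k.factorial * c k with hS
    have h1 : S ^ 2 ≤ 2 * G y := by
      have h2 : S = ∑ k ∈ Finset.range K, ((2 * (s * A)) ^ k / k.factorial) * (c k / (2 * A) ^ k) := by
        refine Finset.sum_congr rfl fun k _ => ?_
        have h3 : (2 * (s * A)) ^ k = s ^ k * (2 * A) ^ k := by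
          rw [← mul_pow]
          congr 1
          ring
        rw [h3]
        field_simp
      rw [h2]
      refine (Finset.sum_mul_sq_le_sq_mul_sq _ _ _).trans ?_
      refine mul_le_mul (le_trans (Finset.sum_le_sum fun k _ => ?_) (hgeo K))
        (Finset.sum_le_sum fun k _ => ?_) (Finset.sum_nonneg fun _ _ => sq_nonneg _) (by norm_num)
      · have h3 : (2 * (s * A)) ^ k / k.factorial ≤ (1 / 2) ^ k := by
          refine (div_le_self (by positivity) (hfac k)).trans ?_
          exact pow_le_pow_left₀ (by positivity) (by linarith) k
        refine (pow_le_pow_left₀ (by positivity) h3 2).trans_eq ?_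
        rw [← pow_mul, mul_comm, pow_mul]
        norm_num
      · rw [div_pow, div_pow, one_pow, ← pow_mul, ← pow_mul, mul_comm k 2, one_div, inv_mul_eq_div]
        exact div_le_div_of_nonneg_right (hc k) (by positivity)
    have h2 : (polyEval f x - S) ^ 2 ≤ I := by
      rw [← sq_abs]
      refine (pow_le_pow_left₀ (abs_nonneg _) hT 2).trans ?_
      rw [mul_pow, Real.sq_sqrt (by positivity)]
      have h3 : (s ^ K / K.factorial) ^ 2 ≤ (s ^ K) ^ 2 :=
        pow_le_pow_left₀ (by positivity) (div_le_self (by positivity) (hfac K)) 2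
      have h4 : ((s * A) ^ K) ^ 2 * M ≤ 1 := by
        have h5 : ((s * A) ^ K) ^ 2 ≤ ((1 / 4) ^ K) ^ 2 :=
          pow_le_pow_left₀ (by positivity) (pow_le_pow_left₀ (by positivity) hsA K) 2
        have h6 : ((1 / 4 : ℝ) ^ K) ^ 2 ≤ (1 / 4) ^ K := by
          rw [sq]
          exact mul_le_of_le_one_left (by positivity) (pow_le_one₀ (by norm_num) (by norm_num))
        refine (mul_le_mul (h5.trans h6) hK.le hM0 (by positivity)).trans_eq ?_
        rw [← mul_pow]
        norm_num
      calc M * ((A ^ 2) ^ K * I) * (s ^ K / K.factorial) ^ 2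
          ≤ M * ((A ^ 2) ^ K * I) * (s ^ K) ^ 2 := mul_le_mul_of_nonneg_left h3 (by positivity)
        _ = ((s * A) ^ K) ^ 2 * M * I := by ring
        _ ≤ 1 * I := mul_le_mul_of_nonneg_right h4 hI0
        _ = I := one_mul I
    nlinarith [sq_nonneg (polyEval f x - S - S)]

/-- A cap of radius comparable to `1 / k` contains at most a fraction `O(k ^ (-d))` of the points of
a design of strength `2 * k`. -/
lemma card_design_near_le {d : ℕ} (hd : 1 ≤ d) {μ : Measure (Sph d)} (hμ : IsUniform μ) {n : ℕ}
    (hn : 0 < n) (x : Fin n → Sph d) (t k : ℕ) (hk : 1 ≤ k) (hkt : 2 * k ≤ t) (hX : IsDesign μ x t)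
    (y : Sph d) :
    ((Finset.univ.filter fun i => dist (x i) y ≤ 1 / (8 * (d + 1) * k)).card : ℝ)
      ≤ n * (4 * (d / k) ^ d) := by
  have := hμ.1
  obtain ⟨M, hMk, hM0, hM, hpk⟩ := exists_peak hd hμ k
  have hk' : (1 : ℝ) ≤ k := by exact_mod_cast hk
  have hd' : (1 : ℝ) ≤ d := by exact_mod_cast hd
  have hn' : (0 : ℝ) < n := by exact_mod_cast hn
  have hMpos : 0 < M := lt_of_lt_of_le (by positivity) hMk
  obtain ⟨p, hp, hpy, hpI⟩ := hpk y
  set s := Finset.univ.filter fun i => dist (x i) y ≤ 1 / (8 * ((d : ℝ) + 1) * k) with hs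
  set A : ℝ := ((d : ℝ) + 1) * k with hA
  have hApos : 0 < A := by positivity
  have hlow : ∀ i ∈ s, M ^ 2 / 4 ≤ polyEval p (x i) ^ 2 := by
    intro i hi
    have hi' : dist (x i) y ≤ 1 / (8 * (d + 1) * k) := (Finset.mem_filter.mp hi).2
    obtain ⟨u, c, hu0, hu, -, hc0, hT⟩ := taylor_sphere hd p (x i) y 1 (M * A) (by positivity)
      (fun z => by
        refine (gradSq_sup_le hμ k 1 p hp M hM0 hM z).trans_eq ?_
        rw [hpI, ← hA]; ring)
    simp only [Finset.sum_range_one, pow_zero, Nat.factorial, hc0, hpy, pow_one] at hT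
    have hsA : u * A ≤ 1 / 4 := by
      have h1 : u ≤ 2 * (1 / (8 * (d + 1) * k)) := hu.trans (by linarith)
      refine (mul_le_mul_of_nonneg_right h1 hApos.le).trans_eq ?_
      rw [hA]
      field_simp
      norm_num
    have h2 : M / 2 ≤ polyEval p (x i) := by
      norm_num at hT
      have h3 := (abs_le.mp hT).1
      nlinarith
    nlinarith
  have hdes := hX (p * p) ((MvPolynomial.totalDegree_mul _ _).trans (by omega))
  simp only [polyEval_mul] at hdes
  simp only [← sq] at hdes
  rw [hpI, div_eq_iff hn'.ne'] at hdes
  have h1 : (s.card : ℝ) * (M ^ 2 / 4) ≤ M * n := by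
    rw [← hdes, ← nsmul_eq_mul]
    exact (Finset.card_nsmul_le_sum s _ _ hlow).trans
      (Finset.sum_le_sum_of_subset_of_nonneg (Finset.subset_univ _) fun _ _ _ => sq_nonneg _)
  have h2 : (s.card : ℝ) ≤ n * (4 / M) := by
    rw [mul_div_assoc', le_div_iff₀ hMpos]
    nlinarith
  refine h2.trans (mul_le_mul_of_nonneg_left ?_ hn'.le)
  rw [div_le_iff₀ hMpos]
  have h3 : ((d : ℝ) / k) ^ d * (k / d) ^ d = 1 := by
    rw [← mul_pow]
    field_simp
    simp
  have h4 := mul_le_mul_of_nonneg_left hMk (show 0 ≤ ((d : ℝ) / k) ^ d by positivity)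
  linarith

/-- The constant in the one-sided Marcinkiewicz–Zygmund inequality for designs. -/
def mzConst (d : ℕ) : ℝ := 40 * d ^ d * (8 * (d + 1)) ^ d / capConst d

/-- One-sided Marcinkiewicz–Zygmund inequality: a design of strength `2 * k` controls the mean square
of polynomials of degree `L ≥ k` up to a factor `O((L / k) ^ d)`. -/
lemma mean_sq_le {d : ℕ} (hd : 1 ≤ d) {μ : Measure (Sph d)} (hμ : IsUniform μ) {n : ℕ}
    (hn : 0 < n) (x : Fin n → Sph d) (t k L : ℕ) (hk : 1 ≤ k) (hkL : k ≤ L) (hkt : 2 * k ≤ t)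
    (hX : IsDesign μ x t) (f : MvPolynomial (Fin (d+1)) ℝ) (hf : f.totalDegree ≤ L) :
    (∑ i, polyEval f (x i) ^ 2) / n
      ≤ mzConst d * ((L : ℝ) / k) ^ d * ∫ y, polyEval f y ^ 2 ∂μ := by
  have := hμ.1
  have hk' : (1 : ℝ) ≤ k := by exact_mod_cast hk
  have hL' : (1 : ℝ) ≤ L := hk'.trans (by exact_mod_cast hkL)
  have hd' : (1 : ℝ) ≤ d := by exact_mod_cast hd
  have hn' : (0 : ℝ) < n := by exact_mod_cast hn
  obtain ⟨H, hHc, hH0, hHI, hH⟩ := exists_local_majorant hd hμ L (hk.trans hkL) f hf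
  set I := ∫ y, polyEval f y ^ 2 ∂μ with hI
  set ρ : ℝ := 1 / (8 * (d + 1) * L) with hρ
  have hρ0 : 0 < ρ := by positivity
  have hρ1 : ρ ≤ 1 := by
    rw [hρ, div_le_one (by positivity)]
    nlinarith
  have hρk : ρ ≤ 1 / (8 * (d + 1) * k) := by
    rw [hρ]
    gcongr
  have hHint : Integrable H μ := integrable_of_continuous hHc
  have hms : ∀ i, MeasurableSet (Metric.closedBall (x i) ρ) := fun i =>
    Metric.isClosed_closedBall.measurableSet
  have h1 : ∀ i, capConst d * ρ ^ d * polyEval f (x i) ^ 2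
      ≤ ∫ y, (Metric.closedBall (x i) ρ).indicator H y ∂μ := by
    intro i
    rw [integral_indicator (hms i)]
    refine (mul_le_mul_of_nonneg_right (capConst_le hμ (x i) ρ hρ0 hρ1) (sq_nonneg _)).trans ?_
    rw [← smul_eq_mul, ← setIntegral_const]
    refine setIntegral_mono_on (integrable_const _).integrableOn hHint.integrableOn (hms i) ?_
    intro y hy
    exact hH _ _ (by rw [dist_comm]; exact hy)
  have h2 : ∑ i, ∫ y, (Metric.closedBall (x i) ρ).indicator H y ∂μ
      ≤ n * (4 * (d / k) ^ d) * (10 * I) := by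
    rw [← integral_finsetSum _ fun i _ => hHint.indicator (hms i)]
    refine le_trans ?_ (mul_le_mul_of_nonneg_left hHI (by positivity))
    rw [← integral_const_mul]
    refine integral_mono (integrable_finsetSum _ fun i _ => hHint.indicator (hms i))
      (hHint.const_mul _) fun y => ?_
    refine le_trans ?_ (mul_le_mul_of_nonneg_right
      (card_design_near_le hd hμ hn x t k hk hkt hX y) (hH0 y))
    rw [← nsmul_eq_mul, ← Finset.sum_const, Finset.sum_filter]
    refine Finset.sum_le_sum fun i _ => ?_
    by_cases hy : y ∈ Metric.closedBall (x i) ρ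
    · rw [Set.indicator_of_mem hy, if_pos]
      rw [dist_comm]
      exact le_trans hy hρk
    · rw [Set.indicator_of_notMem hy]
      split_ifs
      · exact hH0 y
      · exact le_rfl
  have h3 := (Finset.sum_le_sum fun i (_ : i ∈ Finset.univ) => h1 i).trans h2
  rw [← Finset.mul_sum] at h3
  have hcpos := capConst_pos d
  rw [div_le_iff₀ hn']
  have h4 : mzConst d * ((L : ℝ) / k) ^ d * I * n
      = n * (4 * (d / k) ^ d) * (10 * I) / (capConst d * ρ ^ d) := by
    rw [mzConst, hρ, div_pow, div_pow, div_pow, mul_pow _ (L : ℝ)]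
    field_simp
    ring
  rw [h4, le_div_iff₀ (by positivity), mul_comm]
  exact h3

lemma mzConst_pos {d : ℕ} (hd : 1 ≤ d) : 0 < mzConst d := by
  have : (0 : ℝ) < d := by exact_mod_cast hd
  have := capConst_pos d
  unfold mzConst
  positivity

end

theorem stmt_9 (d : ℕ) (hd : 1 ≤ d) (a : ℝ) (ha : 0 < a) :
    ∃ C : ℝ, 0 < C ∧
      ∀ (μ : MeasureTheory.Measure (Sph d)), IsUniform μ →
      ∀ (J : ℕ) (R : ℝ), 0 < R →
      ∀ (n : ℕ), 0 < n → ∀ (x : Fin n → Sph d) (t : ℕ), 2 ^ (J + 2) ≤ t →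
      IsDesign μ x t →
      ∀ g : ℕ → Sph d → ℝ,
        (∀ j, J < j → InPoly d (2 ^ (j + 1)) (g j) ∧
          Real.sqrt (∫ y, g j y ^ 2 ∂μ)
            ≤ R * (2 : ℝ) ^ (-(j : ℝ) * (a + d / 2))) →
        -- the sum over j > J, understood as the supremum of its partial sums,
        -- is bounded by C·R·2^{−J(a+d/2)}
        ∀ F : Finset ℕ, (∀ j ∈ F, J < j) →
          ∑ j ∈ F, Real.sqrt ((∑ i, g j (x i) ^ 2) / n)
            ≤ C * R * (2 : ℝ) ^ (-(J : ℝ) * (a + d / 2)) := by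
  set q : ℝ := (2 : ℝ) ^ (-a) with hq
  have hq0 : 0 < q := by positivity
  have hq1 : q < 1 := Real.rpow_lt_one_of_one_lt_of_neg one_lt_two (by linarith)
  have hmz := mzConst_pos hd
  refine ⟨Real.sqrt (mzConst d) * (1 - q)⁻¹,
    mul_pos (Real.sqrt_pos.mpr hmz) (inv_pos.mpr (by linarith)), ?_⟩
  intro μ hμ J R hR n hn x t ht hX g hg F hF
  have hterm : ∀ j ∈ F, Real.sqrt ((∑ i, g j (x i) ^ 2) / n)
      ≤ Real.sqrt (mzConst d) * R * (2 : ℝ) ^ (-(J : ℝ) * (a + d / 2)) * q ^ (j - J) := by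
    intro j hj
    have hJj := hF j hj
    obtain ⟨⟨f, hf, hgf⟩, hgn⟩ := hg j hJj
    simp only [hgf] at hgn ⊢
    have h1 := mean_sq_le hd hμ hn x t (2 ^ (J + 1)) (2 ^ (j + 1)) Nat.one_le_two_pow
      (Nat.pow_le_pow_right (by norm_num) (by omega)) (by rw [← pow_succ']; exact ht) hX f hf
    have h2 : ((((2 ^ (j + 1) : ℕ) : ℝ) / ((2 ^ (J + 1) : ℕ) : ℝ)) ^ d)
        = ((2 : ℝ) ^ (((j - J : ℕ) : ℝ) * (d / 2))) ^ 2 := by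
      have h3 : j + 1 = (J + 1) + (j - J) := by omega
      rw [h3]
      push_cast
      rw [pow_add (2 : ℝ) (J + 1), mul_div_cancel_left₀ _ (by positivity), ← pow_mul,
        ← Real.rpow_natCast, ← Real.rpow_mul_natCast (by norm_num)]
      congr 1
      push_cast
      ring
    refine (Real.sqrt_le_sqrt h1).trans ?_
    rw [h2, Real.sqrt_mul (by positivity), Real.sqrt_mul hmz.le, Real.sqrt_sq (by positivity)]
    refine (mul_le_mul_of_nonneg_left hgn (by positivity)).trans_eq ?_
    have h4 : (2 : ℝ) ^ (((j - J : ℕ) : ℝ) * (d / 2)) * (2 : ℝ) ^ (-(j : ℝ) * (a + d / 2))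
        = (2 : ℝ) ^ (-(J : ℝ) * (a + d / 2)) * q ^ (j - J) := by
      rw [hq, ← Real.rpow_mul_natCast (by norm_num), ← Real.rpow_add (by norm_num),
        ← Real.rpow_add (by norm_num)]
      congr 1
      rw [Nat.cast_sub hJj.le]
      ring
    linear_combination Real.sqrt (mzConst d) * R * h4
  refine (Finset.sum_le_sum hterm).trans ?_
  rw [← Finset.mul_sum]
  have hgeo : ∑ j ∈ F, q ^ (j - J) ≤ (1 - q)⁻¹ := by
    rw [← tsum_geometric_of_lt_one hq0.le hq1,
      ← Finset.sum_image (g := fun j => j - J) (f := fun m => q ^ m) fun i hi j hj h => by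
        have := hF i hi
        have := hF j hj
        simp only at h
        omega]
    exact (summable_geometric_of_lt_one hq0.le hq1).sum_le_tsum _ fun _ _ => by positivity
  refine (mul_le_mul_of_nonneg_left hgeo (by positivity)).trans_eq ?_
  ring
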